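/- arXiv:2206.05050 — 6 statements merged into one kernel-verified Lean document; each statement's English description precedes it below -/
import Mathlib

section
/- Let V be a finite vertex set with a complete signed graph, color classes V_1,…,V_ℓ ⊆ V with fairness parameters α_1,…,α_ℓ ∈ (0,1], and let ε > 0. For every fractional assignment x on V satisfying the LP fairness constraints, there exists a partition 𝒞 of V such that: (i) every cluster C ∈ 𝒞 with |C| ≥ 2 satisfies |V_i ∩ C| ≤ (1+ε)·α_i·|C| for every i ∈ [ℓ]; and (ii) corr(𝒞) ≤ β · LP(E), where E is the set of all unordered pairs of distinct vertices and β := max{ (1/ε)·max_{i∈[ℓ]} (1−α_i)/α_i , 4 + 1/ε }. -/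
open Finset
open scoped Classical

/-- A fractional assignment (pseudometric valued in `[0,1]`) on the vertex set `V`. -/
structure FracAssign (V : Type*) where
  x : V → V → ℝ
  symm : ∀ u v, x u v = x v u
  diag : ∀ u, x u u = 0
  nonneg : ∀ u v, 0 ≤ x u v
  le_one : ∀ u v, x u v ≤ 1
  triangle : ∀ u v w, x u w ≤ x u v + x v w

variable {V : Type*}

/-- Value of a fractional assignment on an unordered pair. -/
noncomputable def FracAssign.val (f : FracAssign V) : Sym2 V → ℝ :=
  Sym2.lift ⟨f.x, f.symm⟩

/-- LP cost-share of a set `F` of unordered pairs: `x`-value on positive pairs,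
`1 - x` on negative pairs.  `sign e = true` means the pair `e` is positive. -/
noncomputable def LPcost (f : FracAssign V) (sign : Sym2 V → Bool)
    (F : Finset (Sym2 V)) : ℝ :=
  ∑ e ∈ F, if sign e then f.val e else 1 - f.val e

/-- The set of all unordered pairs of distinct vertices. -/
noncomputable def allPairs (V : Type*) [Fintype V] [DecidableEq V] : Finset (Sym2 V) :=
  Finset.univ.filter (fun e : Sym2 V => ¬ e.IsDiag)

/-- `E(S,T)`: unordered pairs of distinct vertices with one endpoint in `S`
and the other in `T`. -/
noncomputable def pairsBetween [Fintype V] [DecidableEq V] (S T : Finset V) :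
    Finset (Sym2 V) :=
  Finset.univ.filter (fun e : Sym2 V =>
    ¬ e.IsDiag ∧ ∃ a b, e = s(a, b) ∧ a ∈ S ∧ b ∈ T)

/-- `E⁺(S,T)`: the positive pairs among `E(S,T)`. -/
noncomputable def Epos [Fintype V] [DecidableEq V] (sign : Sym2 V → Bool)
    (S T : Finset V) : Finset (Sym2 V) :=
  (pairsBetween S T).filter (fun e => sign e)

/-- `E⁻(S,T)`: the negative pairs among `E(S,T)`. -/
noncomputable def Eneg [Fintype V] [DecidableEq V] (sign : Sym2 V → Bool)
    (S T : Finset V) : Finset (Sym2 V) :=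
  (pairsBetween S T).filter (fun e => ¬ sign e)

/-- Both endpoints of the pair `e` lie in a common cluster of `𝒞`. -/
def sameCluster (𝒞 : Finset (Finset V)) (e : Sym2 V) : Prop :=
  ∃ C ∈ 𝒞, ∀ a ∈ e, a ∈ C

/-- Correlation (disagreement) cost of the pairs in `F` w.r.t. the clustering `𝒞`:
negative pairs inside a cluster plus positive pairs across clusters. -/
noncomputable def corrCost (sign : Sym2 V → Bool) (𝒞 : Finset (Finset V))
    (F : Finset (Sym2 V)) : ℕ :=
  (F.filter (fun e => if sign e then ¬ sameCluster 𝒞 e else sameCluster 𝒞 e)).card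

/-- `𝒞` is a partition of `V` into nonempty clusters. -/
def IsPartition [Fintype V] (𝒞 : Finset (Finset V)) : Prop :=
  (∀ C ∈ 𝒞, C.Nonempty) ∧
  (∀ C ∈ 𝒞, ∀ C' ∈ 𝒞, C ≠ C' → Disjoint C C') ∧
  ∀ v : V, ∃ C ∈ 𝒞, v ∈ C

/-- The LP fairness constraints for color classes `Vc` with parameters `α`. -/
def FairLP [Fintype V] (f : FracAssign V) {ℓ : ℕ} (Vc : Fin ℓ → Finset V)
    (α : Fin ℓ → ℝ) : Prop :=
  ∀ u : V, ∀ i : Fin ℓ,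
    ∑ v ∈ Vc i, (1 - f.x u v) ≤ α i * ∑ v : V, (1 - f.x u v)

/-- A `(ρ,σ)`-cluster sequence: each `C j` is the `ρ`-ball (inside the still
uncovered vertices) around its center `u j`, and is `σ`-dense. -/
def ClusterSeq [Fintype V] [DecidableEq V] (f : FracAssign V) (ρ σ : ℝ) {k : ℕ}
    (C : Fin k → Finset V) (u : Fin k → V) : Prop :=
  ∀ j : Fin k,
    (C j).Nonempty ∧
    u j ∈ Finset.univ \ ((Finset.univ.filter (fun i => i < j)).biUnion C) ∧
    C j = (Finset.univ \ ((Finset.univ.filter (fun i => i < j)).biUnion C)).filter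
            (fun v => f.x (u j) v ≤ ρ) ∧
    ∑ v ∈ C j, f.x (u j) v ≤ σ * (C j).card

/-!
Greedily take as a cluster the ball of radius `1 / 2`, among the vertices still uncovered, around
some vertex `u` for which this ball is dense (its average distance from `u` is at most
`σ = 1 / (4 + 1 / ε)`) and approximately fair; when no such `u` is left, the remaining vertices
become singletons. A dense ball pays, at the rate `β` of its LP cost, for its own disagreements and
for those with each vertex left outside, and in the latter case it keeps a reserve of `1 / (2 ε)`
times the LP similarity `1 - x` of each pair crossing its boundary. The reserves pay for the
singletons: if the ball `B` around a remaining vertex `v` is not dense, then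
`|B| ≤ β ∑_{w ∈ B} x v w`; if it is unfair to some color, the LP fairness constraint at `v` gives
`|B| ≤ β ∑_{w ∈ B} x v w + (1 / ε) ∑_{w ∉ B} (1 - x v w)`. A pair of remaining vertices is counted
at both of its endpoints, so half of this bound has to be covered by reserves.
-/

section SymmetricSums

variable {M : Type*} [AddCommMonoid M]

lemma sum_sum_mk_union [DecidableEq V] {A B : Finset V} (hAB : Disjoint A B) (φ : Sym2 V → M) :
    ∑ v ∈ A ∪ B, ∑ w ∈ A ∪ B, φ s(v, w) =
      ∑ v ∈ A, ∑ w ∈ A, φ s(v, w) + 2 • ∑ v ∈ A, ∑ w ∈ B, φ s(v, w) +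
        ∑ v ∈ B, ∑ w ∈ B, φ s(v, w) := by
  have hswap : ∑ v ∈ B, ∑ w ∈ A, φ s(v, w) = ∑ v ∈ A, ∑ w ∈ B, φ s(v, w) := by
    rw [sum_comm]
    simp only [Sym2.eq_swap]
  simp only [sum_union hAB, sum_add_distrib, hswap, two_nsmul]
  abel

lemma sum_sum_mk_of_diag_eq_zero {φ : Sym2 V → M} (hφ : ∀ v, φ s(v, v) = 0) (S : Finset V) :
    ∑ v ∈ S, ∑ w ∈ S, φ s(v, w) = 2 • ∑ e ∈ S.sym2, φ e := by
  induction S using Finset.cons_induction with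
  | empty => simp
  | cons a S ha ih =>
    have hrow : ∑ v ∈ S, φ s(v, a) = ∑ v ∈ S, φ s(a, v) := by simp only [Sym2.eq_swap]
    simp only [sym2_cons, sum_disjUnion, sum_map, sum_cons, sum_add_distrib, hφ, ih, hrow,
      Sym2.mkEmbedding_apply, two_nsmul, zero_add]
    abel

end SymmetricSums

namespace FracAssign

variable (f : FracAssign V)

lemma one_sub_nonneg (u v : V) : 0 ≤ 1 - f.x u v :=
  sub_nonneg.2 (f.le_one u v)

lemma le_add_from (u v w : V) : f.x v w ≤ f.x u v + f.x u w := by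
  linarith [f.triangle v u w, f.symm v u]

lemma sub_le_from (u v w : V) : f.x u v - f.x u w ≤ f.x v w := by
  linarith [f.triangle u w v, f.symm w v]

/-- The vertices of `U` within distance `1/2` of `u`: the candidate cluster around `u` when `U` is
the set of vertices that are still uncovered. -/
noncomputable def halfBall (U : Finset V) (u : V) : Finset V :=
  U.filter fun w ↦ f.x u w ≤ 1 / 2

variable {f}

lemma halfBall_subset {U : Finset V} {u : V} : f.halfBall U u ⊆ U :=
  filter_subset _ _

lemma mem_halfBall_self {U : Finset V} {u : V} (hu : u ∈ U) : u ∈ f.halfBall U u :=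
  mem_filter.2 ⟨hu, by rw [f.diag]; norm_num⟩

lemma le_half_of_mem_halfBall {U : Finset V} {u w : V} (hw : w ∈ f.halfBall U u) :
    f.x u w ≤ 1 / 2 :=
  (mem_filter.1 hw).2

lemma half_lt_of_mem_sdiff_halfBall [DecidableEq V] {U : Finset V} {u w : V}
    (hw : w ∈ U \ f.halfBall U u) : 1 / 2 < f.x u w := by
  obtain ⟨hwU, hwB⟩ := mem_sdiff.1 hw
  exact not_le.1 fun h ↦ hwB (mem_filter.2 ⟨hwU, h⟩)

variable (f) in
/-- `S` is `σ`-dense around `u`: the average distance from `u` to `S` is at most `σ`. Multiplied out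
by `|S|`, so that the empty set is dense. -/
def IsDense (σ : ℝ) (u : V) (S : Finset V) : Prop :=
  ∑ w ∈ S, f.x u w ≤ σ * S.card

lemma IsDense.sum_nonpos {σ c : ℝ} {u : V} {S : Finset V} (hS : f.IsDense σ u S) (hc : 0 ≤ c)
    {g : V → ℝ} (hg : ∀ w ∈ S, g w ≤ c * (f.x u w - σ)) : ∑ w ∈ S, g w ≤ 0 := by
  have hsum : ∑ w ∈ S, (f.x u w - σ) ≤ 0 := by
    rw [sum_sub_distrib, sum_const, nsmul_eq_mul, mul_comm]
    exact sub_nonpos.2 hS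
  calc ∑ w ∈ S, g w ≤ ∑ w ∈ S, c * (f.x u w - σ) := sum_le_sum hg
    _ = c * ∑ w ∈ S, (f.x u w - σ) := (mul_sum ..).symm
    _ ≤ 0 := mul_nonpos_of_nonneg_of_nonpos hc hsum

lemma IsDense.of_insert_farthest [DecidableEq V] {σ : ℝ} {u a : V} {S : Finset V}
    (h : f.IsDense σ u (insert a S)) (ha : a ∉ S) (hfar : ∀ w ∈ S, f.x u w ≤ f.x u a) :
    f.IsDense σ u S := by
  unfold IsDense at h ⊢
  rcases le_total σ (f.x u a) with hσ | hσ
  · rw [sum_insert ha, card_insert_of_notMem ha] at h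
    push_cast at h
    linarith
  · rw [mul_comm, ← nsmul_eq_mul]
    exact sum_le_card_nsmul _ _ _ fun w hw ↦ (hfar w hw).trans hσ

lemma card_le_of_not_isDense [Fintype V] [DecidableEq V] {t σ β : ℝ} (ht : 0 ≤ t) (hβ : 0 ≤ β)
    (hβσ : 1 ≤ β * σ) {u : V} {S : Finset V} (hS : ¬ f.IsDense σ u S) :
    (S.card : ℝ) ≤ β * ∑ w ∈ S, f.x u w + t * ∑ w ∈ Sᶜ, (1 - f.x u w) := by
  have hout : 0 ≤ t * ∑ w ∈ Sᶜ, (1 - f.x u w) :=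
    mul_nonneg ht (sum_nonneg fun w _ ↦ f.one_sub_nonneg u w)
  calc (S.card : ℝ) ≤ β * σ * S.card := le_mul_of_one_le_left (Nat.cast_nonneg _) hβσ
    _ = β * (σ * S.card) := mul_assoc ..
    _ ≤ β * ∑ w ∈ S, f.x u w := mul_le_mul_of_nonneg_left (not_le.1 hS).le hβ
    _ ≤ _ := le_add_of_nonneg_right hout

lemma card_le_of_card_inter_gt [Fintype V] [DecidableEq V] {ε β a : ℝ} (hε : 0 < ε) (hβ : 0 ≤ β)
    (ha : 1 - a ≤ β * (ε * a)) {u : V} {A S : Finset V}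
    (hfair : ∑ w ∈ A, (1 - f.x u w) ≤ a * ∑ w, (1 - f.x u w))
    (hS : (1 + ε) * a * S.card < (A ∩ S).card) :
    (S.card : ℝ) ≤ β * ∑ w ∈ S, f.x u w + 1 / ε * ∑ w ∈ Sᶜ, (1 - f.x u w) := by
  have ha_pos : 0 < a := by
    by_contra! h
    nlinarith [mul_nonneg hβ (mul_nonneg hε.le (neg_nonneg.2 h))]
  set X := ∑ w ∈ S, f.x u w
  set Z := ∑ w ∈ Sᶜ, (1 - f.x u w)
  have hX : 0 ≤ X := sum_nonneg fun w _ ↦ f.nonneg u w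
  have hinter : ((A ∩ S).card : ℝ) - X ≤ ∑ w ∈ A, (1 - f.x u w) :=
    calc ((A ∩ S).card : ℝ) - X ≤ (A ∩ S).card - ∑ w ∈ A ∩ S, f.x u w :=
          sub_le_sub_left
            (sum_le_sum_of_subset_of_nonneg inter_subset_right fun w _ _ ↦ f.nonneg u w) _
      _ = ∑ w ∈ A ∩ S, (1 - f.x u w) := by simp [sum_sub_distrib]
      _ ≤ _ := sum_le_sum_of_subset_of_nonneg inter_subset_left fun w _ _ ↦ f.one_sub_nonneg u w
  have htotal : ∑ w, (1 - f.x u w) = Z + (S.card - X) := by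
    rw [← sum_compl_add_sum S]
    simp [Z, X, sum_sub_distrib]
  rw [htotal] at hfair
  refine le_of_mul_le_mul_left ?_ (mul_pos hε ha_pos)
  calc ε * a * S.card ≤ (1 - a) * X + a * Z := by linarith
    _ ≤ β * (ε * a) * X + a * Z := by gcongr
    _ = ε * a * (β * X + 1 / ε * Z) := by field_simp

end FracAssign

section Clusters

variable {𝒞 : Finset (Finset V)} {C : Finset V} {v w : V}

lemma sameCluster_mk : sameCluster 𝒞 s(v, w) ↔ ∃ C ∈ 𝒞, v ∈ C ∧ w ∈ C := by
  simp [sameCluster]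

lemma sameCluster_of_mem (hC : C ∈ 𝒞) (hv : v ∈ C) (hw : w ∈ C) : sameCluster 𝒞 s(v, w) :=
  sameCluster_mk.2 ⟨C, hC, hv, hw⟩

lemma sameCluster_insert_of_notMem [DecidableEq V] (hv : v ∉ C) :
    sameCluster (insert C 𝒞) s(v, w) ↔ sameCluster 𝒞 s(v, w) := by
  simp [sameCluster_mk, hv]

lemma not_sameCluster_of_disjoint (h𝒞 : ∀ D ∈ 𝒞, Disjoint C D) (hw : w ∈ C) :
    ¬ sameCluster 𝒞 s(v, w) := by
  rw [sameCluster_mk]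
  rintro ⟨D, hD, -, hwD⟩
  exact disjoint_left.1 (h𝒞 D hD) hw hwD

lemma not_sameCluster_bot {U : Finset V} (hvw : v ≠ w) :
    ¬ sameCluster (⊥ : Finpartition U).parts s(v, w) := by
  rw [sameCluster_mk]
  rintro ⟨C, hC, hv, hw⟩
  obtain ⟨z, -, rfl⟩ := Finpartition.mem_bot_iff.1 hC
  exact hvw ((mem_singleton.1 hv).trans (mem_singleton.1 hw).symm)

lemma isPartition_parts [Fintype V] [DecidableEq V] (P : Finpartition (univ : Finset V)) :
    IsPartition P.parts :=
  ⟨fun _ ↦ P.nonempty_of_mem_parts, fun _ hC _ hD hne ↦ P.disjoint hC hD hne,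
    fun v ↦ P.exists_mem (mem_univ v)⟩

/-- No color class `Vc i` occupies more than a `(1 + ε) * α i` fraction of `C`. -/
def IsApproxFair [DecidableEq V] {ι : Type*} (Vc : ι → Finset V) (α : ι → ℝ) (ε : ℝ)
    (C : Finset V) : Prop :=
  ∀ i, ((Vc i ∩ C).card : ℝ) ≤ (1 + ε) * α i * C.card

end Clusters

/-- The disagreement of the clustering `𝒞` on the pair `e` minus `β` times the LP cost of `e`; the
clustering is a `β`-approximation of the LP when the excesses of all pairs add up to at most `0`. -/
noncomputable def excess (f : FracAssign V) (sign : Sym2 V → Bool) (β : ℝ) (𝒞 : Finset (Finset V))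
    (e : Sym2 V) : ℝ :=
  (if (if sign e then ¬ sameCluster 𝒞 e else sameCluster 𝒞 e) then 1 else 0) -
    β * if sign e then f.val e else 1 - f.val e

section Excess

variable {f : FracAssign V} {sign : Sym2 V → Bool} {β : ℝ} {𝒞 : Finset (Finset V)}

lemma sum_excess (F : Finset (Sym2 V)) :
    ∑ e ∈ F, excess f sign β 𝒞 e = corrCost sign 𝒞 F - β * LPcost f sign F := by
  simp only [excess, corrCost, LPcost, sum_sub_distrib, mul_sum, sum_boole]

lemma excess_congr_sign {sign' : Sym2 V → Bool} {e : Sym2 V} (h : sign e = sign' e) :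
    excess f sign β 𝒞 e = excess f sign' β 𝒞 e := by
  simp only [excess, h]

lemma excess_congr_sameCluster {𝒟 : Finset (Finset V)} {e : Sym2 V}
    (h : sameCluster 𝒞 e ↔ sameCluster 𝒟 e) :
    excess f sign β 𝒞 e = excess f sign β 𝒟 e := by
  simp only [excess, h]

variable {v w : V}

lemma excess_of_sameCluster (h : sameCluster 𝒞 s(v, w)) :
    excess f sign β 𝒞 s(v, w) =
      if sign s(v, w) then -(β * f.x v w) else 1 - β * (1 - f.x v w) := by
  by_cases hs : sign s(v, w) <;> simp [excess, h, hs, FracAssign.val]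

lemma excess_of_not_sameCluster (h : ¬ sameCluster 𝒞 s(v, w)) :
    excess f sign β 𝒞 s(v, w) =
      if sign s(v, w) then 1 - β * f.x v w else -(β * (1 - f.x v w)) := by
  by_cases hs : sign s(v, w) <;> simp [excess, h, hs, FracAssign.val]

lemma excess_diag (hsign : sign s(v, v)) (h : sameCluster 𝒞 s(v, v)) :
    excess f sign β 𝒞 s(v, v) = 0 := by
  simp [excess_of_sameCluster h, hsign, f.diag]

lemma excess_le_of_le_half (hβ : 0 ≤ β) (h : f.x v w ≤ 1 / 2) :
    excess f sign β 𝒞 s(v, w) ≤ 1 - β * f.x v w := by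
  have hfar := mul_nonneg hβ (f.one_sub_nonneg v w)
  have hflip : β * f.x v w ≤ β * (1 - f.x v w) := by gcongr; linarith
  by_cases hs : sameCluster 𝒞 s(v, w)
  · rw [excess_of_sameCluster hs]
    split_ifs <;> linarith only [hfar, hflip]
  · rw [excess_of_not_sameCluster hs]
    split_ifs <;> linarith only [hflip]

lemma excess_le_of_half_le {t : ℝ} (ht : 0 ≤ t) (hβ : 4 + t ≤ β) (hs : ¬ sameCluster 𝒞 s(v, w))
    (h : 1 / 2 ≤ f.x v w) : excess f sign β 𝒞 s(v, w) ≤ -(t * (1 - f.x v w)) := by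
  rw [excess_of_not_sameCluster hs]
  split_ifs
  · nlinarith [mul_le_mul_of_nonneg_right hβ (f.nonneg v w)]
  · nlinarith [mul_le_mul_of_nonneg_right hβ (f.one_sub_nonneg v w), f.one_sub_nonneg v w]

section InsideCluster

variable {σ : ℝ} {u : V} {S : Finset V}

lemma sum_excess_row_nonpos (hβ : 4 ≤ β) (hσ : σ ≤ 1 / 4) (hS : f.IsDense σ u S)
    (hsame : ∀ w ∈ S, sameCluster 𝒞 s(v, w)) (hv : f.x u v ≤ 1 / 2)
    (hfar : ∀ w ∈ S, f.x u w ≤ f.x u v) :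
    ∑ w ∈ S, excess f sign β 𝒞 s(v, w) ≤ 0 := by
  rcases lt_or_ge (f.x u v) σ with hvσ | hvσ
  · refine sum_nonpos fun w hw ↦ ?_
    have hclose : f.x v w ≤ 1 / 2 := by linarith [f.le_add_from u v w, hfar w hw]
    rw [excess_of_sameCluster (hsame w hw)]
    split_ifs
    · nlinarith [f.nonneg v w]
    · nlinarith
  · refine hS.sum_nonpos (c := β) (by linarith) fun w hw ↦ ?_
    rw [excess_of_sameCluster (hsame w hw)]
    split_ifs
    · nlinarith [f.sub_le_from u v w]
    · nlinarith [f.le_add_from u v w]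

-- Adding the vertices by increasing distance from the center, each new row is charged to a set
-- that is still dense.
lemma sum_excess_nonpos_of_isDense (hβ : 4 ≤ β) (hσ : σ ≤ 1 / 4)
    (hS : f.IsDense σ u S) (hsame : ∀ v ∈ S, ∀ w ∈ S, sameCluster 𝒞 s(v, w))
    (hhalf : ∀ w ∈ S, f.x u w ≤ 1 / 2) :
    ∑ v ∈ S, ∑ w ∈ S, excess f sign β 𝒞 s(v, w) ≤ 0 := by
  induction S using Finset.induction_on_max_value (f.x u) with
  | empty => simp
  | insert a S ha hfar ih =>
    have haS := mem_insert_self a S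
    have hsub := subset_insert a S
    have hS' := hS.of_insert_farthest ha hfar
    have hdiag : excess f sign β 𝒞 s(a, a) ≤ 0 := by
      rw [excess_of_sameCluster (hsame a haS a haS), f.diag]
      split_ifs <;> linarith
    have hrow : ∑ w ∈ S, excess f sign β 𝒞 s(a, w) ≤ 0 :=
      sum_excess_row_nonpos hβ hσ hS' (fun w hw ↦ hsame a haS w (hsub hw)) (hhalf a haS) hfar
    have hrest : ∑ v ∈ S, ∑ w ∈ S, excess f sign β 𝒞 s(v, w) ≤ 0 :=
      ih hS' (fun v hv w hw ↦ hsame v (hsub hv) w (hsub hw)) fun w hw ↦ hhalf w (hsub hw)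
    rw [insert_eq, sum_sum_mk_union (disjoint_singleton_left.2 ha)]
    simp only [sum_singleton, nsmul_eq_mul, Nat.cast_ofNat]
    linarith

end InsideCluster

section AcrossClusters

variable {t σ : ℝ} {u : V}

lemma four_add_three_halves_mul_le (ht : 0 ≤ t) (hσ : (4 + t) * σ ≤ 1) :
    (4 + 3 / 2 * t) * σ ≤ 1 + t / 8 := by
  nlinarith

lemma excess_cross_far_le (ht : 0 ≤ t) (hσ : (4 + t) * σ ≤ 1) (hβ : 4 + t ≤ β)
    (hsep : ¬ sameCluster 𝒞 s(v, w)) (hw : f.x u w ≤ 1 / 2) (hv : 1 - σ ≤ f.x u v) :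
    excess f sign β 𝒞 s(v, w) + t / 2 * (1 - f.x v w) ≤ 0 := by
  have hdist : 1 / 2 - σ ≤ f.x v w := by linarith [f.sub_le_from u v w]
  have hconst := four_add_three_halves_mul_le ht hσ
  rw [excess_of_not_sameCluster hsep]
  split_ifs
  · nlinarith [mul_le_mul_of_nonneg_right hβ (f.nonneg v w)]
  · nlinarith [mul_le_mul_of_nonneg_right hβ (f.one_sub_nonneg v w), f.one_sub_nonneg v w]

-- The right-hand side is affine in `f.x u w` with its zero at `σ`, so it sums to at most `0` over a
-- dense set. At `f.x u v = 1 / 2` its slope is the slope `4 + 3 / 2 * t` in `f.x u w` of the bound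
-- for a positive pair.
lemma excess_cross_near_le (ht : 0 ≤ t) (hσ₀ : 0 ≤ σ) (hσ : (4 + t) * σ ≤ 1) (hβ : 4 + t ≤ β)
    (hsep : ¬ sameCluster 𝒞 s(v, w)) (hw : f.x u w ≤ 1 / 2) (hv : 1 / 2 ≤ f.x u v)
    (hvσ : f.x u v ≤ 1 - σ) :
    excess f sign β 𝒞 s(v, w) + t / 2 * (1 - f.x v w) ≤
      2 * (4 + 3 / 2 * t) * (1 - f.x u v) * (f.x u w - σ) := by
  have hlow := f.sub_le_from u v w
  have hup := f.le_add_from u v w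
  have hconst := four_add_three_halves_mul_le ht hσ
  rw [excess_of_not_sameCluster hsep]
  set K := 4 + 3 / 2 * t with hK
  set D := f.x u v
  set y := f.x u w
  have hK₀ : 0 ≤ K := by positivity
  split_ifs
  · have hcoeff : 1 / 2 - D + (y - σ) ≤ 2 * (1 - D) * (y - σ) := by
      nlinarith [mul_nonneg (sub_nonneg.2 hv) (sub_nonneg.2 hw)]
    calc 1 - β * f.x v w + t / 2 * (1 - f.x v w) ≤ 1 + t / 2 - K * f.x v w := by
          rw [hK]
          linarith [mul_le_mul_of_nonneg_right hβ (f.nonneg v w)]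
      _ ≤ K * (1 / 2 - σ) - K * (D - y) := by linarith [mul_le_mul_of_nonneg_left hlow hK₀]
      _ = K * (1 / 2 - D + (y - σ)) := by ring
      _ ≤ K * (2 * (1 - D) * (y - σ)) := mul_le_mul_of_nonneg_left hcoeff hK₀
      _ = 2 * K * (1 - D) * (y - σ) := by ring
  · have hcoeff : σ * (D + y - 1) ≤ (1 - D) * (y - σ) := by
      nlinarith [mul_nonneg (f.nonneg u w) (sub_nonneg.2 hvσ)]
    have hcost : -(β * (1 - f.x v w)) + t / 2 * (1 - f.x v w) ≤ (4 + t / 2) * (f.x v w - 1) := by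
      linarith [mul_le_mul_of_nonneg_right hβ (f.one_sub_nonneg v w)]
    have hreserve : (4 + t / 2) * (f.x v w - 1) ≤ 2 * K * (σ * (D + y - 1)) := by
      rcases le_total (D + y) 1 with hDy | hDy
      · calc (4 + t / 2) * (f.x v w - 1) ≤ (4 + t / 2) * (D + y - 1) := by gcongr
          _ ≤ 2 * K * σ * (D + y - 1) :=
            mul_le_mul_of_nonpos_right (by linarith) (by linarith)
          _ = 2 * K * (σ * (D + y - 1)) := mul_assoc ..
      · exact (mul_nonpos_of_nonneg_of_nonpos (by positivity) (by linarith [f.le_one v w])).trans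
          (mul_nonneg (by positivity) (mul_nonneg hσ₀ (by linarith)))
    calc _ ≤ 2 * K * (σ * (D + y - 1)) := hcost.trans hreserve
      _ ≤ 2 * K * ((1 - D) * (y - σ)) := by gcongr
      _ = 2 * K * (1 - D) * (y - σ) := (mul_assoc ..).symm

lemma sum_excess_cross_le (ht : 0 ≤ t) (hσ₀ : 0 ≤ σ) (hσ : (4 + t) * σ ≤ 1) (hβ : 4 + t ≤ β)
    {C : Finset V} (hC : f.IsDense σ u C) (hhalf : ∀ w ∈ C, f.x u w ≤ 1 / 2)
    (hsep : ∀ w ∈ C, ¬ sameCluster 𝒞 s(v, w)) (hv : 1 / 2 ≤ f.x u v) :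
    ∑ w ∈ C, excess f sign β 𝒞 s(v, w) ≤ -(t / 2 * ∑ w ∈ C, (1 - f.x v w)) := by
  have hsum : ∑ w ∈ C, (excess f sign β 𝒞 s(v, w) + t / 2 * (1 - f.x v w)) ≤ 0 := by
    rcases le_total (1 - σ) (f.x u v) with hvσ | hvσ
    · exact sum_nonpos fun w hw ↦
        excess_cross_far_le ht hσ hβ (hsep w hw) (hhalf w hw) hvσ
    · refine hC.sum_nonpos (mul_nonneg (by positivity) (f.one_sub_nonneg u v)) fun w hw ↦
        excess_cross_near_le ht hσ₀ hσ hβ (hsep w hw) (hhalf w hw) hv hvσ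
  rw [sum_add_distrib, ← mul_sum] at hsum
  linarith

end AcrossClusters

section Greedy

variable [Fintype V] [DecidableEq V] {t σ : ℝ} {U : Finset V}

lemma sum_excess_leftover_row_le (ht : 0 ≤ t) (hβ : 4 + t ≤ β)
    (hsep : ∀ w ∈ U, v ≠ w → ¬ sameCluster 𝒞 s(v, w))
    (hball : ((f.halfBall U v).card : ℝ) ≤
      β * ∑ w ∈ f.halfBall U v, f.x v w + t * ∑ w ∈ (f.halfBall U v)ᶜ, (1 - f.x v w)) :
    ∑ w ∈ U, excess f sign β 𝒞 s(v, w) ≤ t * ∑ w ∈ Uᶜ, (1 - f.x v w) := by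
  set B := f.halfBall U v
  have hBU : B ⊆ U := FracAssign.halfBall_subset
  have hnear : ∑ w ∈ B, excess f sign β 𝒞 s(v, w) ≤ B.card - β * ∑ w ∈ B, f.x v w :=
    calc _ ≤ ∑ w ∈ B, (1 - β * f.x v w) := sum_le_sum fun w hw ↦
          excess_le_of_le_half (by linarith) (FracAssign.le_half_of_mem_halfBall hw)
      _ = _ := by simp [sum_sub_distrib, mul_sum]
  have hfar : ∑ w ∈ U \ B, excess f sign β 𝒞 s(v, w) ≤ -(t * ∑ w ∈ U \ B, (1 - f.x v w)) := by
    rw [mul_sum, ← sum_neg_distrib]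
    refine sum_le_sum fun w hw ↦ ?_
    have hx := FracAssign.half_lt_of_mem_sdiff_halfBall hw
    have hne : v ≠ w := by
      rintro rfl
      rw [f.diag] at hx
      norm_num at hx
    exact excess_le_of_half_le ht hβ (hsep w (mem_sdiff.1 hw).1 hne) hx.le
  have hcompl : ∑ w ∈ Bᶜ, (1 - f.x v w) =
      ∑ w ∈ U \ B, (1 - f.x v w) + ∑ w ∈ Uᶜ, (1 - f.x v w) := by
    rw [← sum_sdiff (compl_subset_compl.2 hBU), compl_sdiff_compl]
  rw [hcompl, mul_add] at hball
  rw [← sum_sdiff hBU]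
  linarith

lemma sum_excess_insert_le (ht : 0 ≤ t) (hσ₀ : 0 ≤ σ) (hσ : (4 + t) * σ ≤ 1) (hβ : 4 + t ≤ β)
    {u : V} {W C : Finset V} (hWC : Disjoint W C) (h𝒞 : ∀ D ∈ 𝒞, Disjoint C D)
    (hdense : f.IsDense σ u C) (hhalf : ∀ w ∈ C, f.x u w ≤ 1 / 2)
    (hfar : ∀ v ∈ W, 1 / 2 ≤ f.x u v)
    (hW : ∑ v ∈ W, ∑ w ∈ W, excess f sign β 𝒞 s(v, w) ≤
      t * ∑ v ∈ W, ∑ w ∈ Wᶜ, (1 - f.x v w)) :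
    ∑ v ∈ W ∪ C, ∑ w ∈ W ∪ C, excess f sign β (insert C 𝒞) s(v, w) ≤
      t * ∑ v ∈ W ∪ C, ∑ w ∈ (W ∪ C)ᶜ, (1 - f.x v w) := by
  have hsame {v w : V} (hv : v ∈ W) : sameCluster (insert C 𝒞) s(v, w) ↔ sameCluster 𝒞 s(v, w) :=
    sameCluster_insert_of_notMem (disjoint_left.1 hWC hv)
  have hrest : ∑ v ∈ W, ∑ w ∈ W, excess f sign β (insert C 𝒞) s(v, w) =
      ∑ v ∈ W, ∑ w ∈ W, excess f sign β 𝒞 s(v, w) :=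
    sum_congr rfl fun v hv ↦ sum_congr rfl fun w _ ↦ excess_congr_sameCluster (hsame hv)
  have hcross : ∑ v ∈ W, ∑ w ∈ C, excess f sign β (insert C 𝒞) s(v, w) ≤
      -(t / 2 * ∑ v ∈ W, ∑ w ∈ C, (1 - f.x v w)) := by
    rw [mul_sum, ← sum_neg_distrib]
    exact sum_le_sum fun v hv ↦ sum_excess_cross_le ht hσ₀ hσ hβ hdense hhalf
      (fun w hw ↦ (hsame hv).not.2 (not_sameCluster_of_disjoint h𝒞 hw)) (hfar v hv)
  have hinside : ∑ v ∈ C, ∑ w ∈ C, excess f sign β (insert C 𝒞) s(v, w) ≤ 0 :=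
    sum_excess_nonpos_of_isDense (by linarith) (by nlinarith) hdense
      (fun v hv w hw ↦ sameCluster_of_mem (mem_insert_self _ _) hv hw) hhalf
  have hcompl (v : V) : ∑ w ∈ Wᶜ, (1 - f.x v w) =
      ∑ w ∈ C, (1 - f.x v w) + ∑ w ∈ (W ∪ C)ᶜ, (1 - f.x v w) := by
    rw [← sum_sdiff (subset_compl_iff_disjoint_left.2 hWC), add_comm, sdiff_eq_inter_compl,
      ← compl_union]
  have hmono : t * ∑ v ∈ W, ∑ w ∈ (W ∪ C)ᶜ, (1 - f.x v w) ≤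
      t * ∑ v ∈ W ∪ C, ∑ w ∈ (W ∪ C)ᶜ, (1 - f.x v w) :=
    mul_le_mul_of_nonneg_left (sum_le_sum_of_subset_of_nonneg subset_union_left fun v _ _ ↦
      sum_nonneg fun w _ ↦ f.one_sub_nonneg v w) ht
  simp only [hcompl, sum_add_distrib, mul_add] at hW
  rw [sum_sum_mk_union hWC, hrest, nsmul_eq_mul, Nat.cast_ofNat]
  linarith

variable {ι : Type*} {Vc : ι → Finset V} {α : ι → ℝ} {ε : ℝ}

-- Bounding the excess inside `U` by the LP similarity between `U` and its complement makes the
-- induction close: splitting off a cluster `C` turns the pairs between `C` and the rest of `U` into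
-- such outgoing pairs, and `sum_excess_cross_le` pays for exactly these.
theorem exists_fair_finpartition (hε : 0 < ε) (hβ : 4 + 1 / ε ≤ β)
    (hαβ : ∀ i, 1 - α i ≤ β * (ε * α i))
    (hfair : ∀ u i, ∑ v ∈ Vc i, (1 - f.x u v) ≤ α i * ∑ v, (1 - f.x u v)) (U : Finset V) :
    ∃ P : Finpartition U, (∀ C ∈ P.parts, 2 ≤ C.card → IsApproxFair Vc α ε C) ∧
      ∑ v ∈ U, ∑ w ∈ U, excess f sign β P.parts s(v, w) ≤
        1 / ε * ∑ v ∈ U, ∑ w ∈ Uᶜ, (1 - f.x v w) := by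
  have ht : 0 ≤ 1 / ε := by positivity
  set σ := (4 + 1 / ε)⁻¹
  have hσ₀ : 0 ≤ σ := by positivity
  have hσ : (4 + 1 / ε) * σ = 1 := mul_inv_cancel₀ (by positivity)
  induction U using Finset.strongInduction with
  | H U ih =>
  by_cases hgood : ∃ u ∈ U, f.IsDense σ u (f.halfBall U u) ∧
      IsApproxFair Vc α ε (f.halfBall U u)
  · obtain ⟨u, hu, hdense, hfairC⟩ := hgood
    set C := f.halfBall U u
    have huC : u ∈ C := FracAssign.mem_halfBall_self hu
    have hunion : U \ C ∪ C = U := sdiff_union_of_subset FracAssign.halfBall_subset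
    obtain ⟨P, hPfair, hP⟩ :=
      ih (U \ C) (sdiff_ssubset FracAssign.halfBall_subset ⟨u, huC⟩)
    refine ⟨P.extend (ne_empty_of_mem huC) sdiff_disjoint hunion,
      forall_mem_insert _ _ _ |>.2 ⟨fun _ ↦ hfairC, hPfair⟩, ?_⟩
    have hextend := sum_excess_insert_le ht hσ₀ hσ.le hβ sdiff_disjoint
      (fun D hD ↦ disjoint_sdiff.mono_right (P.le hD)) hdense
      (fun w ↦ FracAssign.le_half_of_mem_halfBall)
      (fun v hv ↦ (FracAssign.half_lt_of_mem_sdiff_halfBall hv).le) hP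
    rwa [hunion] at hextend
  · push Not at hgood
    refine ⟨⊥, fun C hC hcard ↦ ?_, ?_⟩
    · obtain ⟨a, -, rfl⟩ := Finpartition.mem_bot_iff.1 hC
      simp at hcard
    · rw [mul_sum]
      refine sum_le_sum fun v hv ↦ sum_excess_leftover_row_le ht hβ
        (fun w _ hvw ↦ not_sameCluster_bot hvw) ?_
      by_cases hdense : f.IsDense σ v (f.halfBall U v)
      · obtain ⟨i, hi⟩ := not_forall.1 (hgood v hv hdense)
        exact FracAssign.card_le_of_card_inter_gt hε (by linarith) (hαβ i) (hfair v i)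
          (not_le.1 hi)
      · exact FracAssign.card_le_of_not_isDense ht (by linarith)
          (hσ.symm.le.trans (mul_le_mul_of_nonneg_right hβ hσ₀)) hdense

end Greedy

end Excess

theorem fair_correlation_clustering_main_general [Fintype V] [DecidableEq V]
    (sign : Sym2 V → Bool) {ι : Type*} (Vc : ι → Finset V) (α : ι → ℝ) {ε β : ℝ} (hε : 0 < ε)
    (hβ : 4 + 1 / ε ≤ β) (hαβ : ∀ i, 1 - α i ≤ β * (ε * α i)) (f : FracAssign V)
    (hfair : ∀ u i, ∑ v ∈ Vc i, (1 - f.x u v) ≤ α i * ∑ v, (1 - f.x u v)) :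
    ∃ 𝒞 : Finset (Finset V), IsPartition 𝒞 ∧
      (∀ C ∈ 𝒞, 2 ≤ C.card → ∀ i, ((Vc i ∩ C).card : ℝ) ≤ (1 + ε) * α i * C.card) ∧
      (corrCost sign 𝒞 (allPairs V) : ℝ) ≤ β * LPcost f sign (allPairs V) := by
  -- With the diagonal counted as positive, its pairs have no excess.
  let signD : Sym2 V → Bool := fun e ↦ decide e.IsDiag || sign e
  obtain ⟨P, hPfair, hP⟩ := exists_fair_finpartition (sign := signD) hε hβ hαβ hfair univ
  have hpart := isPartition_parts P
  refine ⟨P.parts, hpart, hPfair, ?_⟩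
  have hdiag (v : V) : excess f signD β P.parts s(v, v) = 0 := by
    obtain ⟨C, hC, hv⟩ := hpart.2.2 v
    exact excess_diag (by simp [signD]) (sameCluster_of_mem hC hv hv)
  have hsum : ∑ e ∈ allPairs V, excess f sign β P.parts e =
      ∑ e ∈ (univ : Finset V).sym2, excess f signD β P.parts e := by
    simp only [sym2_univ, allPairs, sum_filter, ite_not]
    refine sum_congr rfl fun e _ ↦ ?_
    split_ifs with he
    · induction e with | _ v w
      obtain rfl := Sym2.mk_isDiag_iff.1 he
      exact (hdiag v).symm
    · exact excess_congr_sign (by simp [signD, he])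
  rw [sum_sum_mk_of_diag_eq_zero hdiag, ← hsum, sum_excess] at hP
  simp only [compl_univ, sum_empty, sum_const_zero, mul_zero, nsmul_eq_mul] at hP
  push_cast at hP
  linarith

/-- For every fractional assignment satisfying the LP fairness
constraints there is a partition whose non-singleton clusters are `(1+ε)`-fair
and whose correlation cost is at most `β · LP(E)` with
`β = max ((1/ε) · max_i (1-α i)/α i) (4 + 1/ε)`. -/
theorem fair_correlation_clustering_main {V : Type*} [Fintype V] [DecidableEq V]
    (sign : Sym2 V → Bool) {ℓ : ℕ} (hℓ : 0 < ℓ)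
    (Vc : Fin ℓ → Finset V) (α : Fin ℓ → ℝ)
    (hα0 : ∀ i, 0 < α i) (hα1 : ∀ i, α i ≤ 1)
    (ε : ℝ) (hε : 0 < ε)
    (f : FracAssign V) (hfair : FairLP f Vc α) :
    ∃ 𝒞 : Finset (Finset V), IsPartition 𝒞 ∧
      (∀ C ∈ 𝒞, 2 ≤ C.card → ∀ i : Fin ℓ,
        ((Vc i ∩ C).card : ℝ) ≤ (1 + ε) * α i * C.card) ∧
      (corrCost sign 𝒞 (allPairs V) : ℝ) ≤
        max ((1 / ε) *
              Finset.univ.sup' ⟨⟨0, hℓ⟩, Finset.mem_univ _⟩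
                (fun i => (1 - α i) / α i))
            (4 + 1 / ε) * LPcost f sign (allPairs V) := by
  refine fair_correlation_clustering_main_general sign Vc α hε (le_max_right _ _) (fun i ↦ ?_) f
    hfair
  rw [← div_le_iff₀ (mul_pos hε (hα0 i)), ← one_mul (1 - α i), mul_div_mul_comm]
  exact (mul_le_mul_of_nonneg_left (le_sup' (fun i ↦ (1 - α i) / α i) (mem_univ i))
    (one_div_nonneg.2 hε.le)).trans (le_max_left _ _)
end

section
/- Let V be a finite vertex set with a complete signed graph, ε > 0, ℓ ≥ 2, and let p_1,…,p_ℓ be reals with p_1 = 1 and p_i ≥ 1 for all i. Set α_i := p_i / (Σ_{j=1}^ℓ p_j) for each i ∈ [ℓ]. For every fractional assignment x on V satisfying the LP fairness constraints (with these α_i), there exists a partition 𝒞 of V such that every cluster C ∈ 𝒞 with |C| ≥ 2 satisfies |V_i ∩ C| ≤ (1+ε)·α_i·|C| for every i ∈ [ℓ], and corr(𝒞) ≤ max{ (1/ε)·(Σ_{j=1}^ℓ p_j − 1) , 4 + 1/ε } · LP(E), where E is the set of all unordered pairs of distinct vertices. -/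
open Finset
open scoped Classical

variable {V : Type*}

/-!
Clusters are peeled off greedily. Among the vertices `R` not yet clustered, let `C` be the ball of
radius `1/2` about some `u ∈ R`, and put `t = 1/ε`. The ball becomes a cluster if it is fair and
dense, meaning that `(4 + t) * ∑ v ∈ C, x u v ≤ |C|`. Density allows any nonnegative multiple of
`∑ v ∈ C, (1 - (4 + t) * x u v)` to be added to an estimate; with suitable multipliers, pointwise
triangle inequalities show that `4 + t` times the LP cost pays for the disagreements inside and
around `C`, and moreover for `t/2` times the affinity `∑ (1 - x w v)` between the vertices `w` left
over and the vertices `v` of `C`.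

When no ball can be cut out, the remaining vertices become singletons. A vertex `u` whose ball is
not dense pays for its positive edges with its own LP cost. If instead the ball is unfair, then the
LP fairness constraint at `u` bounds `|C|` by LP cost inside `C` plus `t` times the affinity of `u`
to `V \ C`; the part of this affinity that leads into earlier clusters has been paid for when those
were cut out.
-/

namespace CorrelationClustering

/-! ### Ordered pairs -/

/-- The LP cost of an ordered pair, zero on the diagonal. Sums of costs are taken over ordered
pairs throughout, so that each unordered pair is counted twice. -/
noncomputable def lpShare (f : FracAssign V) (sign : Sym2 V → Bool) (u v : V) : ℝ :=
  if u = v then 0 else if sign s(u, v) then f.x u v else 1 - f.x u v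

/-- Indicator of the positive ordered pairs of distinct vertices. -/
noncomputable def posIndicator (sign : Sym2 V → Bool) (u v : V) : ℝ :=
  if u ≠ v ∧ sign s(u, v) then 1 else 0

/-- Indicator of the negative ordered pairs of distinct vertices. -/
noncomputable def negIndicator (sign : Sym2 V → Bool) (u v : V) : ℝ :=
  if u ≠ v ∧ ¬ sign s(u, v) then 1 else 0

/-- Indicator of the ordered pairs on which the clustering `𝒞` disagrees with `sign`. -/
noncomputable def disagreement (sign : Sym2 V → Bool) (𝒞 : Finset (Finset V)) (u v : V) : ℝ :=
  if sameCluster 𝒞 s(u, v) then negIndicator sign u v else posIndicator sign u v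

variable (f : FracAssign V) (sign : Sym2 V → Bool) (𝒞 : Finset (Finset V)) {t K : ℝ}

lemma lpShare_comm (u v : V) : lpShare f sign u v = lpShare f sign v u := by
  simp only [lpShare, Sym2.eq_swap (a := u), f.symm u v, eq_comm (a := u)]

lemma disagreement_comm (u v : V) : disagreement sign 𝒞 u v = disagreement sign 𝒞 v u := by
  simp only [disagreement, negIndicator, posIndicator, Sym2.eq_swap (a := u), ne_comm (a := u)]

lemma lpShare_nonneg (u v : V) : 0 ≤ lpShare f sign u v := by
  have := f.nonneg u v
  have := f.le_one u v
  unfold lpShare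
  split_ifs <;> linarith

lemma posIndicator_le_one (u v : V) : posIndicator sign u v ≤ 1 := by
  unfold posIndicator
  split_ifs <;> norm_num

variable {f} in
lemma le_lpShare_of_le_half {u v : V} (h : f.x u v ≤ 1 / 2) : f.x u v ≤ lpShare f sign u v := by
  unfold lpShare
  split_ifs with huv
  · rw [huv, f.diag]
  · exact le_rfl
  · linarith

variable {𝒞} in
lemma sameCluster_mk {u v : V} : sameCluster 𝒞 s(u, v) ↔ ∃ C ∈ 𝒞, u ∈ C ∧ v ∈ C := by
  simp [sameCluster]

lemma sum_sum_ne_eq_two_nsmul_sum_allPairs {M : Type*} [AddCommMonoid M] [Fintype V]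
    [DecidableEq V] (g : Sym2 V → M) :
    ∑ u : V, ∑ v : V, (if u = v then 0 else g s(u, v)) = 2 • ∑ e ∈ allPairs V, g e := by
  have hoff : ∑ u : V, ∑ v : V, (if u = v then 0 else g s(u, v)) =
      ∑ q : V × V with q.1 ≠ q.2, g s(q.1, q.2) := by
    rw [← Fintype.sum_prod_type', sum_filter]
    simp only [ne_eq, ite_not]
  rw [hoff, ← sum_fiberwise_of_maps_to (t := allPairs V) (g := fun q : V × V => s(q.1, q.2))
    (fun q hq => by simpa [allPairs] using hq), ← sum_nsmul]
  refine sum_congr rfl fun e he => ?_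
  induction e using Sym2.ind with
  | _ a b =>
    have hab : a ≠ b := by simpa [allPairs] using he
    have hfiber : ({q | q.1 ≠ q.2} : Finset (V × V)).filter (fun q => s(q.1, q.2) = s(a, b)) =
        {(a, b), (b, a)} := by
      ext ⟨c, d⟩
      simp only [mem_filter, mem_univ, true_and, mem_insert, mem_singleton, Sym2.eq_iff,
        Prod.mk.injEq, and_iff_right_iff_imp]
      rintro (⟨rfl, rfl⟩ | ⟨rfl, rfl⟩)
      exacts [hab, hab.symm]
    rw [hfiber, sum_pair (by simp [hab]), Sym2.eq_swap (a := b), two_nsmul]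

lemma sum_sum_lpShare [Fintype V] [DecidableEq V] :
    ∑ u, ∑ v, lpShare f sign u v = 2 * LPcost f sign (allPairs V) := by
  rw [LPcost, ← Nat.cast_ofNat, ← nsmul_eq_mul, ← sum_sum_ne_eq_two_nsmul_sum_allPairs]
  simp only [lpShare, FracAssign.val, Sym2.lift_mk]
  congr!

lemma sum_sum_disagreement [Fintype V] [DecidableEq V] :
    ∑ u, ∑ v, disagreement sign 𝒞 u v = 2 * (corrCost sign 𝒞 (allPairs V) : ℝ) := by
  rw [corrCost, card_filter, Nat.cast_sum, ← Nat.cast_ofNat, ← nsmul_eq_mul,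
    ← sum_sum_ne_eq_two_nsmul_sum_allPairs]
  refine sum_congr rfl fun u _ => sum_congr rfl fun v _ => ?_
  unfold disagreement negIndicator posIndicator
  split_ifs <;> simp_all

lemma sum_sum_union_of_symm {α M : Type*} [AddCommMonoid M] [DecidableEq α] {A B : Finset α}
    (hAB : Disjoint A B) {g : α → α → M} (hg : ∀ a b, g a b = g b a) :
    ∑ a ∈ A ∪ B, ∑ b ∈ A ∪ B, g a b =
      ∑ a ∈ A, ∑ b ∈ A, g a b + 2 • ∑ b ∈ B, ∑ a ∈ A, g b a + ∑ a ∈ B, ∑ b ∈ B, g a b := by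
  have hcross : ∑ a ∈ A, ∑ b ∈ B, g a b = ∑ b ∈ B, ∑ a ∈ A, g b a := by
    rw [sum_comm]
    simp only [hg]
  simp only [sum_union hAB, sum_add_distrib, hcross]
  abel

/-! ### Disagreements caused by a dense ball -/

section DenseBall

variable {f} {u : V} {C : Finset V}

theorem sum_negIndicator_le (hC : ∀ v ∈ C, f.x u v ≤ 1 / 2)
    (hdense : 4 * ∑ v ∈ C, f.x u v ≤ #C) :
    ∑ v ∈ C, ∑ w ∈ C, negIndicator sign v w ≤ 4 * ∑ v ∈ C, ∑ w ∈ C, lpShare f sign v w := by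
  let far : V → ℝ := fun v => if 1 / 4 ≤ f.x u v then 1 else 0
  have far_nonneg (v : V) : 0 ≤ far v := by simp only [far]; split_ifs <;> norm_num
  have pointwise : ∀ v ∈ C, ∀ w ∈ C, far w * (1 - 4 * f.x u v) + far v * (1 - 4 * f.x u w) ≤
      4 * lpShare f sign v w - negIndicator sign v w := by
    intro v hv w hw
    have hvu := f.symm v u
    have hwv := f.symm w v
    have := f.triangle u v w
    have := f.triangle u w v
    have := f.triangle v u w
    have := hC v hv
    have := hC w hw
    have := f.nonneg v w
    rcases eq_or_ne v w with rfl | hvw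
    · simp only [far, lpShare, negIndicator, if_true, ne_eq, not_true_eq_false, false_and, if_false]
      split_ifs <;> linarith
    · simp only [far, lpShare, negIndicator, hvw, ne_eq, not_false_eq_true, true_and, if_false]
      split_ifs <;> linarith
  have hsum : 0 ≤ ∑ v ∈ C, (1 - 4 * f.x u v) := by
    simpa [sum_sub_distrib, ← mul_sum] using hdense
  have hfar : 0 ≤ ∑ v ∈ C, ∑ w ∈ C, far v * (1 - 4 * f.x u w) :=
    sum_nonneg fun v _ => by rw [← mul_sum]; exact mul_nonneg (far_nonneg v) hsum
  have hfar' : 0 ≤ ∑ v ∈ C, ∑ w ∈ C, far w * (1 - 4 * f.x u v) := by rwa [sum_comm]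
  have htotal := sum_le_sum fun v hv => sum_le_sum (pointwise v hv)
  simp only [sum_add_distrib, sum_sub_distrib, ← mul_sum] at hfar hfar' htotal
  linarith

-- The two right-hand sides are the surplus left by `4 + t` times the LP cost of a positive and of a
-- negative pair `w v`, where `d = x u w`, `y = x u v` and `z = x w v`.
lemma exists_multiplier_le_surplus {d : ℝ} (ht : 0 ≤ t) (hd : 1 / 2 ≤ d) :
    ∃ c, 0 ≤ c ∧ ∀ y z, 0 ≤ y → y ≤ 1 / 2 → d - y ≤ z → z ≤ d + y → z ≤ 1 →
      c * (1 - (4 + t) * y) ≤ (4 + t) * z - (1 + t / 2 * (1 - z)) ∧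
      c * (1 - (4 + t) * y) ≤ (4 + t) * (1 - z) - t / 2 * (1 - z) := by
  have surplus_pos {y z : ℝ} (hy : y ≤ 1 / 2) (hz : d - y ≤ z) :
      (4 + t) * (d - y) - (1 + t / 2) ≤ (4 + t) * z - (1 + t / 2 * (1 - z)) := by
    nlinarith
  have surplus_neg {z : ℝ} (hz : z ≤ 1) :
      2 * (1 - z) ≤ (4 + t) * (1 - z) - t / 2 * (1 - z) := by
    nlinarith
  rcases le_total ((4 + t) * (1 - d)) 1 with hfar | hnear
  · refine ⟨0, le_rfl, fun y z _ hy hzl _ hz1 => ?_⟩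
    rw [zero_mul]
    exact ⟨by nlinarith [surplus_pos hy hzl], by linarith [surplus_neg hz1]⟩
  · have hB : 0 < 1 + t / 2 := by positivity
    obtain ⟨m, hm⟩ : ∃ m, m = (4 + t) * (1 - d) - 1 := ⟨_, rfl⟩
    have hm0 : 0 ≤ m := by linarith
    refine ⟨m / (1 + t / 2), by positivity, fun y z hy0 hy hzl hzu hz1 => ?_⟩
    rw [div_mul_eq_mul_div, div_le_iff₀ hB, div_le_iff₀ hB]
    constructor
    · calc m * (1 - (4 + t) * y)
          = ((4 + t) * (d - y) - (1 + t / 2)) * (1 + t / 2) -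
              (2 + t / 2) * (4 + t) * ((1 - 2 * y) * (d - 1 / 2)) := by rw [hm]; ring
        _ ≤ ((4 + t) * (d - y) - (1 + t / 2)) * (1 + t / 2) := sub_le_self _ <|
            mul_nonneg (by positivity) (mul_nonneg (by linarith) (by linarith))
        _ ≤ _ := mul_le_mul_of_nonneg_right (surplus_pos hy hzl) hB.le
    · refine le_trans ?_ (mul_le_mul_of_nonneg_right (surplus_neg hz1) hB.le)
      rcases le_total (1 - (4 + t) * y) 0 with hy' | hy'
      · exact (mul_nonpos_of_nonneg_of_nonpos hm0 hy').trans
          (mul_nonneg (by linarith) hB.le)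
      · calc m * (1 - (4 + t) * y)
            = 2 * (1 - d - y) * (1 + t / 2) -
                ((1 - (4 + t) * y) * (2 * d - 1) + y * ((2 + t) * m)) := by rw [hm]; ring
          _ ≤ 2 * (1 - d - y) * (1 + t / 2) := sub_le_self _ <|
              add_nonneg (mul_nonneg hy' (by linarith)) (by positivity)
          _ ≤ 2 * (1 - z) * (1 + t / 2) := mul_le_mul_of_nonneg_right (by linarith) hB.le

theorem sum_posIndicator_add_affinity_le {w : V} (ht : 0 ≤ t) (hC : ∀ v ∈ C, f.x u v ≤ 1 / 2)
    (hdense : (4 + t) * ∑ v ∈ C, f.x u v ≤ #C) (hw : 1 / 2 ≤ f.x u w) (hwC : w ∉ C) :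
    ∑ v ∈ C, posIndicator sign w v + t / 2 * ∑ v ∈ C, (1 - f.x w v) ≤
      (4 + t) * ∑ v ∈ C, lpShare f sign w v := by
  obtain ⟨c, hc, hsurplus⟩ := exists_multiplier_le_surplus ht hw
  have pointwise : ∀ v ∈ C, c * (1 - (4 + t) * f.x u v) ≤
      (4 + t) * lpShare f sign w v - (posIndicator sign w v + t / 2 * (1 - f.x w v)) := by
    intro v hv
    have hwv : w ≠ v := fun h => hwC (h ▸ hv)
    obtain ⟨hpos, hneg⟩ := hsurplus (f.x u v) (f.x w v) (f.nonneg u v) (hC v hv)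
      (by linarith [f.triangle u v w, f.symm v w])
      (by linarith [f.triangle w u v, f.symm w u]) (f.le_one w v)
    by_cases hsign : sign s(w, v)
    · simpa [lpShare, posIndicator, hwv, hsign] using hpos
    · simpa [lpShare, posIndicator, hwv, hsign] using hneg
  have hsum : 0 ≤ c * ∑ v ∈ C, (1 - (4 + t) * f.x u v) :=
    mul_nonneg hc (by simpa [sum_sub_distrib, ← mul_sum] using hdense)
  have htotal := sum_le_sum pointwise
  simp only [sum_add_distrib, sum_sub_distrib, ← mul_sum] at hsum htotal ⊢
  linarith

end DenseBall

/-! ### Greedy clustering -/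

/-- The ball of radius `1/2` about `u`, restricted to `R`. -/
noncomputable def halfBall (f : FracAssign V) (R : Finset V) (u : V) : Finset V :=
  {v ∈ R | f.x u v ≤ 1 / 2}

/-- The number of ordered disagreements allowed inside the set `R` of vertices left over when
`Rᶜ` has already been clustered: `K` times the LP cost of `R`, plus `t` times the affinity between
`R` and `Rᶜ`. -/
noncomputable def budget [Fintype V] [DecidableEq V] (f : FracAssign V) (sign : Sym2 V → Bool)
    (t K : ℝ) (R : Finset V) : ℝ :=
  K * ∑ u ∈ R, ∑ v ∈ R, lpShare f sign u v + t * ∑ u ∈ R, ∑ v ∈ Rᶜ, (1 - f.x u v)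

lemma sum_compl_eq_sum_add_sum_compl_union {α M : Type*} [Fintype α] [DecidableEq α]
    [AddCommMonoid M] {A B : Finset α} (hAB : Disjoint A B) (g : α → M) :
    ∑ a ∈ Aᶜ, g a = ∑ a ∈ B, g a + ∑ a ∈ (A ∪ B)ᶜ, g a := by
  have hsplit : Aᶜ = B ∪ (A ∪ B)ᶜ := by
    ext a
    have : a ∈ B → a ∉ A := fun h => disjoint_right.mp hAB h
    simp only [mem_compl, mem_union]
    tauto
  rw [hsplit, sum_union]
  exact disjoint_compl_right.mono_right (compl_subset_compl.mpr subset_union_right)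

variable {f} in
lemma posIndicator_add_le_of_half_le {u v : V} (ht : 0 ≤ t) (h : 1 / 2 ≤ f.x u v) :
    posIndicator sign u v + t * (1 - f.x u v) ≤ (4 + t) * lpShare f sign u v := by
  have huv : u ≠ v := by
    rintro rfl
    norm_num [f.diag] at h
  have := f.le_one u v
  by_cases hsign : sign s(u, v)
  · simp only [posIndicator, lpShare, huv, hsign, ne_eq, not_false_eq_true, and_self, if_true,
      if_false]
    nlinarith
  · simp only [posIndicator, lpShare, huv, hsign, Bool.false_eq_true, and_false, if_false]
    linarith

variable {f} in
theorem sum_posIndicator_le_of_card_halfBall_le [Fintype V] [DecidableEq V] {R : Finset V} {u : V}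
    (ht : 0 ≤ t) (hK : 4 + t ≤ K)
    (hcard : #(halfBall f R u) ≤ K * ∑ v ∈ halfBall f R u, f.x u v +
      t * ∑ v ∈ (halfBall f R u)ᶜ, (1 - f.x u v)) :
    ∑ v ∈ R, posIndicator sign u v ≤
      K * ∑ v ∈ R, lpShare f sign u v + t * ∑ v ∈ Rᶜ, (1 - f.x u v) := by
  set C := halfBall f R u with hC
  have hCR : C ⊆ R := filter_subset _ _
  have hnear : ∑ v ∈ C, posIndicator sign u v ≤ #C := by
    simpa using sum_le_sum fun v (_ : v ∈ C) => posIndicator_le_one sign u v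
  have hcost : K * ∑ v ∈ C, f.x u v ≤ K * ∑ v ∈ C, lpShare f sign u v :=
    mul_le_mul_of_nonneg_left
      (sum_le_sum fun v hv => le_lpShare_of_le_half sign (mem_filter.mp hv).2) (by linarith)
  have hfar : ∑ v ∈ R \ C, posIndicator sign u v + t * ∑ v ∈ R \ C, (1 - f.x u v) ≤
      K * ∑ v ∈ R \ C, lpShare f sign u v := by
    rw [mul_sum, mul_sum, ← sum_add_distrib]
    refine sum_le_sum fun v hv => ?_
    have hv : 1 / 2 ≤ f.x u v := by
      simp only [hC, halfBall, mem_sdiff, mem_filter, not_and, not_le] at hv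
      exact (hv.2 hv.1).le
    exact (posIndicator_add_le_of_half_le sign ht hv).trans
      (mul_le_mul_of_nonneg_right hK (lpShare_nonneg f sign u v))
  rw [sum_compl_eq_sum_add_sum_compl_union disjoint_sdiff, union_sdiff_of_subset hCR] at hcard
  rw [← sum_sdiff hCR, ← sum_sdiff hCR]
  linarith

variable {𝒞} in
lemma sum_sum_disagreement_insert [DecidableEq V] {C R : Finset V} (hCR : Disjoint C R)
    (h𝒞 : ∀ A ∈ 𝒞, A ⊆ R) :
    ∑ a ∈ C ∪ R, ∑ b ∈ C ∪ R, disagreement sign (insert C 𝒞) a b =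
      ∑ a ∈ C, ∑ b ∈ C, negIndicator sign a b + 2 * ∑ b ∈ R, ∑ a ∈ C, posIndicator sign b a +
        ∑ a ∈ R, ∑ b ∈ R, disagreement sign 𝒞 a b := by
  have same_insert (a b : V) : sameCluster (insert C 𝒞) s(a, b) ↔
      (a ∈ C ∧ b ∈ C) ∨ sameCluster 𝒞 s(a, b) := by
    simp only [sameCluster_mk, mem_insert, exists_eq_or_imp]
  have not_mem {b : V} (hb : b ∈ R) : b ∉ C := disjoint_right.mp hCR hb
  have not_same {a b : V} (ha : a ∈ C) : ¬ sameCluster 𝒞 s(b, a) := by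
    rw [sameCluster_mk]
    rintro ⟨A, hA, -, haA⟩
    exact not_mem (h𝒞 A hA haA) ha
  have hinside : ∀ a ∈ C, ∀ b ∈ C,
      disagreement sign (insert C 𝒞) a b = negIndicator sign a b := fun a ha b hb => by
    simp only [disagreement, same_insert, ha, hb, and_self, true_or, if_true]
  have hacross : ∀ b ∈ R, ∀ a ∈ C,
      disagreement sign (insert C 𝒞) b a = posIndicator sign b a := fun b hb a ha => by
    simp only [disagreement, same_insert, not_mem hb, not_same ha, false_and, or_self, if_false]
  have hremaining : ∀ a ∈ R, ∀ b ∈ R,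
      disagreement sign (insert C 𝒞) a b = disagreement sign 𝒞 a b := fun a ha b _ => by
    simp only [disagreement, same_insert, not_mem ha, false_and, false_or]
  rw [sum_sum_union_of_symm hCR (disagreement_comm sign _), nsmul_eq_mul, Nat.cast_ofNat,
    sum_congr rfl fun a ha => sum_congr rfl (hinside a ha),
    sum_congr rfl fun b hb => sum_congr rfl (hacross b hb),
    sum_congr rfl fun a ha => sum_congr rfl (hremaining a ha)]

variable {f} in
theorem add_budget_le_budget_union [Fintype V] [DecidableEq V] {u : V} {C R : Finset V}
    (ht : 0 ≤ t) (hK : 4 + t ≤ K) (hC : ∀ v ∈ C, f.x u v ≤ 1 / 2)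
    (hdense : (4 + t) * ∑ v ∈ C, f.x u v ≤ #C) (hR : ∀ w ∈ R, 1 / 2 ≤ f.x u w)
    (hCR : Disjoint C R) :
    ∑ a ∈ C, ∑ b ∈ C, negIndicator sign a b + 2 * ∑ b ∈ R, ∑ a ∈ C, posIndicator sign b a +
      budget f sign t K R ≤ budget f sign t K (C ∪ R) := by
  have hinside : ∑ a ∈ C, ∑ b ∈ C, negIndicator sign a b ≤
      4 * ∑ a ∈ C, ∑ b ∈ C, lpShare f sign a b := by
    refine sum_negIndicator_le sign hC ?_
    have : 0 ≤ t * ∑ v ∈ C, f.x u v := mul_nonneg ht (sum_nonneg fun v _ => f.nonneg u v)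
    linarith
  have hacross : ∑ w ∈ R, ∑ v ∈ C, posIndicator sign w v +
      t / 2 * ∑ w ∈ R, ∑ v ∈ C, (1 - f.x w v) ≤
        (4 + t) * ∑ w ∈ R, ∑ v ∈ C, lpShare f sign w v := by
    rw [mul_sum, mul_sum, ← sum_add_distrib]
    exact sum_le_sum fun w hw => sum_posIndicator_add_affinity_le sign ht hC hdense (hR w hw)
      (disjoint_right.mp hCR hw)
  have haffinity : ∑ w ∈ R, ∑ v ∈ Rᶜ, (1 - f.x w v) ≤
      ∑ w ∈ R, ∑ v ∈ C, (1 - f.x w v) + ∑ w ∈ C ∪ R, ∑ v ∈ (C ∪ R)ᶜ, (1 - f.x w v) := by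
    simp only [sum_compl_eq_sum_add_sum_compl_union hCR.symm, sum_add_distrib, union_comm R]
    gcongr
    · exact fun w _ _ => sum_nonneg fun v _ => sub_nonneg.mpr (f.le_one w v)
    · exact subset_union_right
  have hnonneg (A B : Finset V) : 0 ≤ ∑ a ∈ A, ∑ b ∈ B, lpShare f sign a b :=
    sum_nonneg fun a _ => sum_nonneg fun b _ => lpShare_nonneg f sign a b
  rw [budget, budget, sum_sum_union_of_symm hCR (lpShare_comm f sign), nsmul_eq_mul,
    Nat.cast_ofNat]
  linarith [mul_le_mul_of_nonneg_left haffinity ht,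
    mul_le_mul_of_nonneg_right hK (hnonneg C C), mul_le_mul_of_nonneg_right hK (hnonneg R C),
    mul_nonneg ht (hnonneg C C)]

lemma disagreement_bot_parts_le [DecidableEq V] (R : Finset V) (u v : V) :
    disagreement sign (⊥ : Finpartition R).parts u v ≤ posIndicator sign u v := by
  have hsame : sameCluster (⊥ : Finpartition R).parts s(u, v) → u = v := by
    simp only [sameCluster_mk, Finpartition.mem_bot_iff]
    rintro ⟨_, ⟨w, -, rfl⟩, hu, hv⟩
    exact (mem_singleton.mp hu).trans (mem_singleton.mp hv).symm
  unfold disagreement negIndicator posIndicator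
  split_ifs <;> simp_all

variable {f} in
theorem sum_sum_disagreement_bot_le_budget [Fintype V] [DecidableEq V] {R : Finset V}
    (ht : 0 ≤ t) (hK : 4 + t ≤ K)
    (hcard : ∀ u ∈ R, #(halfBall f R u) ≤ K * ∑ v ∈ halfBall f R u, f.x u v +
      t * ∑ v ∈ (halfBall f R u)ᶜ, (1 - f.x u v)) :
    ∑ u ∈ R, ∑ v ∈ R, disagreement sign (⊥ : Finpartition R).parts u v ≤ budget f sign t K R := by
  rw [budget, mul_sum, mul_sum, ← sum_add_distrib]
  exact sum_le_sum fun u hu =>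
    (sum_le_sum fun v _ => disagreement_bot_parts_le sign R u v).trans
      (sum_posIndicator_le_of_card_halfBall_le sign ht hK (hcard u hu))

theorem exists_finpartition_sum_disagreement_le_budget [Fintype V] [DecidableEq V]
    {Fair : Finset V → Prop} (ht : 0 ≤ t) (hK : 4 + t ≤ K)
    (hunfair : ∀ C u, ¬ Fair C →
      #C ≤ K * ∑ v ∈ C, f.x u v + t * ∑ v ∈ Cᶜ, (1 - f.x u v)) (R : Finset V) :
    ∃ P : Finpartition R, (∀ C ∈ P.parts, 2 ≤ #C → Fair C) ∧
      ∑ u ∈ R, ∑ v ∈ R, disagreement sign P.parts u v ≤ budget f sign t K R := by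
  induction R using Finset.strongInduction with
  | H R ih =>
  by_cases hex : ∃ u ∈ R, (4 + t) * ∑ v ∈ halfBall f R u, f.x u v ≤ #(halfBall f R u) ∧
      Fair (halfBall f R u)
  · obtain ⟨u, huR, hdense, hfair⟩ := hex
    set C := halfBall f R u with hC
    have hCR : C ⊆ R := filter_subset _ _
    have huC : u ∈ C := mem_filter.mpr ⟨huR, by norm_num [f.diag]⟩
    have hfar : ∀ w ∈ R \ C, 1 / 2 ≤ f.x u w := by
      intro w hw
      simp only [hC, halfBall, mem_sdiff, mem_filter, not_and, not_le] at hw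
      exact (hw.2 hw.1).le
    obtain ⟨P, hPfair, hPcost⟩ := ih (R \ C) (sdiff_ssubset hCR ⟨u, huC⟩)
    refine ⟨P.extend (ne_empty_of_mem huC) sdiff_disjoint (sdiff_union_of_subset hCR),
      (forall_mem_insert C P.parts _).mpr ⟨fun _ => hfair, hPfair⟩, ?_⟩
    calc ∑ a ∈ R, ∑ b ∈ R, disagreement sign (insert C P.parts) a b
        = ∑ a ∈ C, ∑ b ∈ C, negIndicator sign a b +
            2 * ∑ b ∈ R \ C, ∑ a ∈ C, posIndicator sign b a +
            ∑ a ∈ R \ C, ∑ b ∈ R \ C, disagreement sign P.parts a b := by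
          rw [← sum_sum_disagreement_insert sign disjoint_sdiff fun A hA => P.subset hA,
            union_sdiff_of_subset hCR]
      _ ≤ _ := by gcongr
      _ ≤ budget f sign t K (C ∪ R \ C) := add_budget_le_budget_union sign ht hK
          (fun v hv => (mem_filter.mp hv).2) hdense hfar disjoint_sdiff
      _ = budget f sign t K R := by rw [union_sdiff_of_subset hCR]
  · refine ⟨⊥, fun C hC h2 => ?_, ?_⟩
    · obtain ⟨v, -, rfl⟩ := Finpartition.mem_bot_iff.mp hC
      simp at h2
    refine sum_sum_disagreement_bot_le_budget sign ht hK fun u hu => ?_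
    by_cases hfair : Fair (halfBall f R u)
    · have hsparse : #(halfBall f R u) < (4 + t) * ∑ v ∈ halfBall f R u, f.x u v :=
        not_le.mp fun h => hex ⟨u, hu, h, hfair⟩
      have hcost : 0 ≤ ∑ v ∈ halfBall f R u, f.x u v := sum_nonneg fun v _ => f.nonneg u v
      have haffinity : 0 ≤ t * ∑ v ∈ (halfBall f R u)ᶜ, (1 - f.x u v) :=
        mul_nonneg ht (sum_nonneg fun v _ => sub_nonneg.mpr (f.le_one u v))
      linarith [mul_le_mul_of_nonneg_right hK hcost]
    · exact hunfair _ u hfair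

/-! ### Unfair clusters -/

variable {f} in
theorem card_le_of_unfair [Fintype V] [DecidableEq V] {W C : Finset V} {u : V} {a α ε : ℝ}
    (ha : 0 < a) (haα : a ≤ α) (hε : 0 < ε)
    (hfair : ∑ v ∈ W, (1 - f.x u v) ≤ α * ∑ v, (1 - f.x u v))
    (hunfair : (1 + ε) * α * #C < #(W ∩ C)) :
    #C ≤ 1 / ε * (1 / a - 1) * ∑ v ∈ C, f.x u v + 1 / ε * ∑ v ∈ Cᶜ, (1 - f.x u v) := by
  have hα : 0 < α := ha.trans_le haα
  have hcost : 0 ≤ ∑ v ∈ C, f.x u v := sum_nonneg fun v _ => f.nonneg u v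
  have hinter : #(W ∩ C) - ∑ v ∈ C, f.x u v ≤ ∑ v ∈ W, (1 - f.x u v) := calc
    #(W ∩ C) - ∑ v ∈ C, f.x u v ≤ #(W ∩ C) - ∑ v ∈ W ∩ C, f.x u v := by
      gcongr
      · exact fun v _ _ => f.nonneg u v
      · exact inter_subset_right
    _ = ∑ v ∈ W ∩ C, (1 - f.x u v) := by simp [sum_sub_distrib]
    _ ≤ ∑ v ∈ W, (1 - f.x u v) := sum_le_sum_of_subset_of_nonneg inter_subset_left
        fun v _ _ => sub_nonneg.mpr (f.le_one u v)
  have htotal : ∑ v, (1 - f.x u v) =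
      #C - ∑ v ∈ C, f.x u v + ∑ v ∈ Cᶜ, (1 - f.x u v) := by
    rw [← sum_add_sum_compl C]
    simp [sum_sub_distrib]
  set X := ∑ v ∈ C, f.x u v
  set Y := ∑ v ∈ Cᶜ, (1 - f.x u v)
  rw [htotal] at hfair
  have hweight : 1 - α ≤ α * (1 / a - 1) := by
    have : 1 ≤ α / a := (one_le_div ha).mpr haα
    linarith [mul_one_div α a]
  have hscaled : α * (ε * #C) ≤ α * ((1 / a - 1) * X + Y) := calc
    α * (ε * #C) ≤ (1 - α) * X + α * Y := by linarith
    _ ≤ α * (1 / a - 1) * X + α * Y := by gcongr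
    _ = α * ((1 / a - 1) * X + Y) := by ring
  calc (#C : ℝ) = 1 / ε * (ε * #C) := by field_simp
    _ ≤ 1 / ε * ((1 / a - 1) * X + Y) := by gcongr; exact le_of_mul_le_mul_left hscaled hα
    _ = _ := by ring

end CorrelationClustering

open CorrelationClustering in
theorem fair_correlation_clustering_proportional_general {V : Type*} [Fintype V] [DecidableEq V]
    (sign : Sym2 V → Bool) {ℓ : ℕ} (Vc : Fin ℓ → Finset V) (α : Fin ℓ → ℝ)
    (a : ℝ) (ha : 0 < a) (hα : ∀ i, a ≤ α i) (ε : ℝ) (hε : 0 < ε)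
    (f : FracAssign V) (hfair : FairLP f Vc α) :
    ∃ 𝒞 : Finset (Finset V), IsPartition 𝒞 ∧
      (∀ C ∈ 𝒞, 2 ≤ #C → ∀ i, (#(Vc i ∩ C) : ℝ) ≤ (1 + ε) * α i * #C) ∧
      (corrCost sign 𝒞 (allPairs V) : ℝ) ≤
        max (1 / ε * (1 / a - 1)) (4 + 1 / ε) * LPcost f sign (allPairs V) := by
  set K := max (1 / ε * (1 / a - 1)) (4 + 1 / ε)
  have hunfair (C : Finset V) (u : V) (hC : ¬ ∀ i, (#(Vc i ∩ C) : ℝ) ≤ (1 + ε) * α i * #C) :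
      #C ≤ K * ∑ v ∈ C, f.x u v + 1 / ε * ∑ v ∈ Cᶜ, (1 - f.x u v) := by
    obtain ⟨i, hi⟩ := not_forall.mp hC
    refine (card_le_of_unfair ha (hα i) hε (hfair u i) (not_le.mp hi)).trans ?_
    gcongr
    · exact sum_nonneg fun v _ => f.nonneg u v
    · exact le_max_left _ _
  obtain ⟨P, hPfair, hPcost⟩ := exists_finpartition_sum_disagreement_le_budget f sign
    (by positivity) (le_max_right _ _) hunfair univ
  refine ⟨P.parts, ⟨fun C hC => P.nonempty_of_mem_parts hC,
    fun C hC C' hC' hne => P.disjoint hC hC' hne, fun v => P.exists_mem (mem_univ v)⟩, hPfair, ?_⟩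
  simp only [budget, sum_sum_disagreement, sum_sum_lpShare, compl_univ, sum_empty, sum_const_zero,
    mul_zero, add_zero] at hPcost
  linarith

/-- The proportional-fairness special case with
`α i = p i / ∑ j, p j`, `p 1 = 1`, giving the bound
`max ((1/ε)·(∑ p - 1)) (4 + 1/ε)`. -/
theorem fair_correlation_clustering_proportional {V : Type*} [Fintype V] [DecidableEq V]
    (sign : Sym2 V → Bool) {ℓ : ℕ} (hℓ : 2 ≤ ℓ)
    (Vc : Fin ℓ → Finset V) (p : Fin ℓ → ℝ)
    (hp1 : p ⟨0, by omega⟩ = 1) (hp : ∀ i, 1 ≤ p i)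
    (ε : ℝ) (hε : 0 < ε)
    (f : FracAssign V)
    (hfair : FairLP f Vc (fun i => p i / ∑ j, p j)) :
    ∃ 𝒞 : Finset (Finset V), IsPartition 𝒞 ∧
      (∀ C ∈ 𝒞, 2 ≤ C.card → ∀ i : Fin ℓ,
        ((Vc i ∩ C).card : ℝ) ≤ (1 + ε) * (p i / ∑ j, p j) * C.card) ∧
      (corrCost sign 𝒞 (allPairs V) : ℝ) ≤
        max ((1 / ε) * ((∑ j, p j) - 1)) (4 + 1 / ε) *
          LPcost f sign (allPairs V) := by
  have hsum : 0 < ∑ j, p j :=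
    sum_pos (fun j _ => one_pos.trans_le (hp j)) ⟨⟨0, by omega⟩, mem_univ _⟩
  simpa only [one_div_one_div] using fair_correlation_clustering_proportional_general sign Vc _
    (1 / ∑ j, p j) (one_div_pos.mpr hsum) (fun i => by gcongr; exact hp i) ε hε f hfair
end

section
/- Let V be a finite vertex set with a complete signed graph, x a fractional assignment on V, and parameters σ, ρ with 0 < σ and 2σ ≤ ρ ≤ 1/2. Let C_1,…,C_k be a (ρ,σ)-cluster sequence, let 𝒞 be the partition of V consisting of the clusters C_1,…,C_k together with a singleton cluster {v} for each v ∈ V ∖ (C_1 ∪ ⋯ ∪ C_k), and let F be the set of all unordered pairs of distinct vertices having at least one endpoint in C_1 ∪ ⋯ ∪ C_k. Then corr_𝒞(F) ≤ max{ 1/(ρ−σ), 1/(1−ρ−σ) } · LP(F). -/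
open Finset
open scoped Classical

variable {V : Type*}

/-!
Charge every pair of `F` to the first cluster `C j` it meets; its other endpoint `w` then lies in
`U_j`. Fix `j` and `w`, let `v` range over `C j`, and let `c` be at most `ρ - σ` and
`1 - ρ - σ`. Since `x (u j) v` averages to at most `σ` over `C j`, the LP shares of the pairs `vw`
pay for `c` times their disagreements as soon as each share, less `c` for a disagreement, is at
least `σ - x (u j) v`. The triangle inequality gives this when `w ∉ C j` and `x (u j) w ≤ 1 - σ`,
and when `w ∈ C j` and `σ ≤ x (u j) w`. In the two remaining cases `x (u j) w` is so close to `1`,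
respectively to `0`, that every single pair pays for itself.
-/

namespace FracAssign

variable (f : FracAssign V) (u v w : V)

lemma sub_le_x : f.x u w - f.x u v ≤ f.x v w :=
  sub_le_iff_le_add'.mpr (f.triangle u v w)

lemma x_le_add : f.x v w ≤ f.x u w + f.x u v := by
  linarith [f.triangle v u w, f.symm u v]

end FracAssign

lemma sum_sub_nonneg_of_sum_le {ι R : Type*} [Ring R] [PartialOrder R] [IsOrderedAddMonoid R]
    {S : Finset ι} {d : ι → R} {σ : R} (h : ∑ v ∈ S, d v ≤ σ * S.card) :
    0 ≤ ∑ v ∈ S, (σ - d v) := by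
  rwa [sum_sub_distrib, sum_const, nsmul_eq_mul, Nat.cast_comm, sub_nonneg]

section Pairs

variable [Fintype V] [DecidableEq V] {M : Type*} [AddCommMonoid M] {S T U : Finset V}

lemma mk_mem_pairsBetween {a b : V} :
    s(a, b) ∈ pairsBetween S T ↔ a ≠ b ∧ (a ∈ S ∧ b ∈ T ∨ b ∈ S ∧ a ∈ T) := by
  simp only [pairsBetween, mem_filter, mem_univ, true_and, Sym2.mk_isDiag_iff, Sym2.eq_iff]
  grind

lemma sum_pairsBetween_of_disjoint (hST : Disjoint S T) (h : Sym2 V → M) :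
    ∑ e ∈ pairsBetween S T, h e = ∑ w ∈ T, ∑ v ∈ S, h s(v, w) := by
  have hdisj : ∀ v ∈ S, v ∉ T := fun _ => (Finset.disjoint_left.mp hST ·)
  have himage : pairsBetween S T = (T ×ˢ S).image fun p => s(p.2, p.1) := by
    ext ⟨a, b⟩
    simp only [mk_mem_pairsBetween, mem_image, mem_product, Prod.exists, Sym2.eq_iff]
    grind
  have hinj : Set.InjOn (fun p : V × V => s(p.2, p.1)) (T ×ˢ S : Finset (V × V)) := by
    rintro ⟨w, v⟩ hp ⟨w', v'⟩ hq heq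
    simp only [Sym2.eq_iff, coe_product, Set.mem_prod, mem_coe] at hp hq heq
    grind
  rw [himage, sum_image hinj, sum_product]

lemma two_nsmul_sum_pairsBetween_self (S : Finset V) (h : Sym2 V → M) :
    2 • ∑ e ∈ pairsBetween S S, h e = ∑ w ∈ S, ∑ v ∈ S.erase w, h s(v, w) := by
  have himage : pairsBetween S S = S.offDiag.image fun p => s(p.1, p.2) := by
    ext ⟨a, b⟩
    simp only [mk_mem_pairsBetween, mem_image, mem_offDiag, Prod.exists, Sym2.eq_iff]
    grind
  have hfiber : ∀ p ∈ S.offDiag,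
      2 • h s(p.1, p.2) = ∑ q ∈ S.offDiag with s(q.1, q.2) = s(p.1, p.2), h s(q.1, q.2) := by
    rintro ⟨a, b⟩ hab
    have hne : a ≠ b := (mem_offDiag.mp hab).2.2
    have hpair : {q ∈ S.offDiag | s(q.1, q.2) = s(a, b)} = {(a, b), (b, a)} := by
      ext ⟨c, d⟩
      simp only [mem_filter, mem_offDiag, Sym2.eq_iff, mem_insert, mem_singleton, Prod.mk.injEq]
      grind
    rw [hpair, sum_pair (by simp [hne]), Sym2.eq_swap (a := b), two_nsmul]
  have hoffDiag : ∀ p : V × V, p ∈ S.offDiag ↔ p.2 ∈ S ∧ p.1 ∈ S.erase p.2 := by grind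
  rw [← sum_nsmul, himage, sum_image' _ hfiber, sum_finset_product_right _ _ _ hoffDiag]

lemma sum_pairsBetween_of_subset (hSU : S ⊆ U) (h : Sym2 V → M) :
    ∑ e ∈ pairsBetween S U, h e =
      ∑ e ∈ pairsBetween S S, h e + ∑ e ∈ pairsBetween S (U \ S), h e := by
  have hdisj : Disjoint (pairsBetween S S) (pairsBetween S (U \ S)) := by
    rw [Finset.disjoint_left]
    rintro ⟨a, b⟩
    simp only [mk_mem_pairsBetween, mem_sdiff]
    grind
  rw [← sum_union hdisj]
  congr 1
  ext ⟨a, b⟩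
  simp only [mem_union, mk_mem_pairsBetween, mem_sdiff]
  grind

lemma sum_pairsBetween_nonneg [LinearOrder M] [IsOrderedAddMonoid M] {h : Sym2 V → M}
    (hSU : S ⊆ U) (hin : ∀ w ∈ S, 0 ≤ ∑ v ∈ S.erase w, h s(v, w))
    (hout : ∀ w ∈ U \ S, 0 ≤ ∑ v ∈ S, h s(v, w)) :
    0 ≤ ∑ e ∈ pairsBetween S U, h e := by
  have hself : 0 ≤ ∑ e ∈ pairsBetween S S, h e := by
    have htwice := two_nsmul_sum_pairsBetween_self S h ▸ sum_nonneg hin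
    exact (nsmul_nonneg_iff two_ne_zero).mp htwice
  rw [sum_pairsBetween_of_subset hSU, sum_pairsBetween_of_disjoint disjoint_sdiff]
  exact add_nonneg hself (sum_nonneg hout)

end Pairs

section Uncovered

variable [Fintype V] [DecidableEq V] {ι : Type*} [Fintype ι] [LinearOrder ι]
  {C : ι → Finset V}

/-- The set `U_j` of vertices lying in none of the clusters that precede `C j`. -/
def uncovered (C : ι → Finset V) (j : ι) : Finset V :=
  univ \ (univ.filter (fun i => i < j)).biUnion C

lemma mem_uncovered {j : ι} {v : V} : v ∈ uncovered C j ↔ ∀ i < j, v ∉ C i := by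
  simp [uncovered]

lemma eq_of_mem_of_subset_uncovered (hC : ∀ j, C j ⊆ uncovered C j) {i j : ι} {v : V}
    (hi : v ∈ C i) (hj : v ∈ C j) : i = j :=
  le_antisymm (not_lt.mp fun hji => mem_uncovered.mp (hC i hi) j hji hj)
    (not_lt.mp fun hij => mem_uncovered.mp (hC j hj) i hij hi)

lemma pairsBetween_biUnion_univ (C : ι → Finset V) :
    pairsBetween (univ.biUnion C) univ =
      univ.biUnion fun j => pairsBetween (C j) (uncovered C j) := by
  have hmem : ∀ a b : V, a ≠ b → a ∈ univ.biUnion C →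
      ∃ j, s(a, b) ∈ pairsBetween (C j) (uncovered C j) := by
    intro a b hab ha
    obtain ⟨i, -, hi⟩ := mem_biUnion.mp ha
    obtain ⟨j, hj, hmin⟩ := WellFounded.has_min wellFounded_lt {j | a ∈ C j ∨ b ∈ C j} ⟨i, .inl hi⟩
    have ha' : a ∈ uncovered C j := mem_uncovered.mpr fun l hl hal => hmin l (.inl hal) hl
    have hb' : b ∈ uncovered C j := mem_uncovered.mpr fun l hl hbl => hmin l (.inr hbl) hl
    exact ⟨j, mk_mem_pairsBetween.mpr ⟨hab, hj.imp (⟨·, hb'⟩) (⟨·, ha'⟩)⟩⟩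
  ext ⟨a, b⟩
  simp only [mem_biUnion, mem_univ, true_and]
  constructor
  · intro he
    obtain ⟨hab, ⟨ha, -⟩ | ⟨hb, -⟩⟩ := mk_mem_pairsBetween.mp he
    · exact hmem a b hab ha
    · simpa only [Sym2.eq_swap] using hmem b a hab.symm hb
  · rintro ⟨j, hj⟩
    have hsub : C j ⊆ univ.biUnion C := subset_biUnion_of_mem C (mem_univ j)
    have hab := mk_mem_pairsBetween.mp hj
    exact mk_mem_pairsBetween.mpr (by grind)

lemma pairwise_disjoint_pairsBetween_uncovered (hC : ∀ j, C j ⊆ uncovered C j) :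
    Pairwise (Function.onFun Disjoint fun j => pairsBetween (C j) (uncovered C j)) := by
  rw [pairwise_disjoint_on]
  intro i j hij
  rw [Finset.disjoint_left]
  rintro ⟨a, b⟩ hi hj
  have hfresh : ∀ v ∈ uncovered C j, v ∉ C i := fun v hv => mem_uncovered.mp hv i hij
  have hsub := hC j
  have hab_i := mk_mem_pairsBetween.mp hi
  have hab_j := mk_mem_pairsBetween.mp hj
  grind

end Uncovered

section SameCluster

variable [DecidableEq V] {a b : V}

lemma sameCluster_union_singletons {𝒞 : Finset (Finset V)} {R : Finset V} (hab : a ≠ b) :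
    sameCluster (𝒞 ∪ R.image fun v => {v}) s(a, b) ↔ sameCluster 𝒞 s(a, b) := by
  simp only [sameCluster, mem_union, mem_image, Sym2.mem_iff, forall_eq_or_imp, forall_eq]
  grind

lemma sameCluster_image_univ {ι : Type*} [Fintype ι] {C : ι → Finset V} :
    sameCluster (univ.image C) s(a, b) ↔ ∃ j, a ∈ C j ∧ b ∈ C j := by
  simp [sameCluster]

end SameCluster

section Surplus

variable {f : FracAssign V} {sign : Sym2 V → Bool} {𝒞 : Finset (Finset V)} {c : ℝ}

/-- The surplus of the pair `e` at rate `c`: its LP cost share, less `c` when the clustering `𝒞`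
disagrees with `e`. On any set of pairs, `c` times the correlation cost is at most the LP cost
exactly when the total surplus is nonnegative. -/
noncomputable def surplus (f : FracAssign V) (sign : Sym2 V → Bool) (𝒞 : Finset (Finset V))
    (c : ℝ) (e : Sym2 V) : ℝ :=
  (if sign e then f.val e else 1 - f.val e) -
    c * if (if sign e then ¬ sameCluster 𝒞 e else sameCluster 𝒞 e) then 1 else 0

lemma sum_surplus (F : Finset (Sym2 V)) :
    ∑ e ∈ F, surplus f sign 𝒞 c e = LPcost f sign F - c * corrCost sign 𝒞 F := by
  simp only [surplus, sum_sub_distrib, ← mul_sum, sum_boole, LPcost, corrCost]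

lemma surplus_of_sameCluster {a b : V} (h : sameCluster 𝒞 s(a, b)) :
    surplus f sign 𝒞 c s(a, b) = if sign s(a, b) then f.x a b else 1 - f.x a b - c := by
  by_cases hs : sign s(a, b) <;> simp [surplus, FracAssign.val, h, hs]

lemma surplus_of_not_sameCluster {a b : V} (h : ¬ sameCluster 𝒞 s(a, b)) :
    surplus f sign 𝒞 c s(a, b) = if sign s(a, b) then f.x a b - c else 1 - f.x a b := by
  by_cases hs : sign s(a, b) <;> simp [surplus, FracAssign.val, h, hs]

variable {ρ σ : ℝ} {u w : V} {S : Finset V}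

lemma sum_surplus_nonneg_of_not_sameCluster
    (hball : ∀ v ∈ S, f.x u v ≤ ρ) (hdense : ∑ v ∈ S, f.x u v ≤ σ * S.card)
    (hw : ρ ≤ f.x u w) (hcut : ∀ v ∈ S, ¬ sameCluster 𝒞 s(v, w))
    (hc₁ : c ≤ ρ - σ) (hc₂ : c ≤ 1 - ρ - σ) :
    0 ≤ ∑ v ∈ S, surplus f sign 𝒞 c s(v, w) := by
  rcases le_or_gt (f.x u w) (1 - σ) with hnear | hfar
  · refine (sum_sub_nonneg_of_sum_le hdense).trans (sum_le_sum fun v hv => ?_)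
    have hlower := f.sub_le_x u v w
    have hupper := f.x_le_add u v w
    rw [surplus_of_not_sameCluster (hcut v hv)]
    split_ifs <;> linarith
  · refine sum_nonneg fun v hv => ?_
    have hlower := f.sub_le_x u v w
    have hradius := hball v hv
    have hle_one := f.le_one v w
    rw [surplus_of_not_sameCluster (hcut v hv)]
    split_ifs <;> linarith

lemma sum_erase_surplus_nonneg_of_sameCluster [DecidableEq V]
    (hball : ∀ v ∈ S, f.x u v ≤ ρ) (hdense : ∑ v ∈ S, f.x u v ≤ σ * S.card)
    (hw : w ∈ S) (hjoin : ∀ v ∈ S.erase w, sameCluster 𝒞 s(v, w)) (hc : c ≤ 1 - ρ - σ) :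
    0 ≤ ∑ v ∈ S.erase w, surplus f sign 𝒞 c s(v, w) := by
  rcases le_or_gt σ (f.x u w) with hfar | hnear
  · calc
      0 ≤ ∑ v ∈ S, (σ - f.x u v) := sum_sub_nonneg_of_sum_le hdense
      _ ≤ ∑ v ∈ S.erase w, (σ - f.x u v) := by
        rw [← sum_erase_add _ _ hw]
        linarith
      _ ≤ ∑ v ∈ S.erase w, surplus f sign 𝒞 c s(v, w) := sum_le_sum fun v hv => by
        have hlower := f.sub_le_x u v w
        have hupper := f.x_le_add u v w
        have hradius := hball w hw
        rw [surplus_of_sameCluster (hjoin v hv)]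
        split_ifs <;> linarith
  · refine sum_nonneg fun v hv => ?_
    have hupper := f.x_le_add u v w
    have hradius := hball v (mem_of_mem_erase hv)
    have hnonneg := f.nonneg v w
    rw [surplus_of_sameCluster (hjoin v hv)]
    split_ifs <;> linarith

end Surplus

namespace ClusterSeq

variable [Fintype V] [DecidableEq V] {f : FracAssign V} {ρ σ : ℝ} {k : ℕ}
  {C : Fin k → Finset V} {u : Fin k → V}

lemma mem_iff (hC : ClusterSeq f ρ σ C u) {j : Fin k} {v : V} :
    v ∈ C j ↔ v ∈ uncovered C j ∧ f.x (u j) v ≤ ρ := by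
  conv_lhs => rw [(hC j).2.2.1]
  exact mem_filter

lemma subset_uncovered (hC : ClusterSeq f ρ σ C u) (j : Fin k) : C j ⊆ uncovered C j :=
  fun _ hv => (hC.mem_iff.mp hv).1

lemma lt_x_of_notMem (hC : ClusterSeq f ρ σ C u) {j : Fin k} {v : V} (hv : v ∈ uncovered C j)
    (hvC : v ∉ C j) : ρ < f.x (u j) v :=
  not_le.mp fun h => hvC (hC.mem_iff.mpr ⟨hv, h⟩)

lemma sum_surplus_pairsBetween_uncovered_nonneg (hC : ClusterSeq f ρ σ C u)
    {sign : Sym2 V → Bool} {𝒞 : Finset (Finset V)} {c : ℝ}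
    (hc₁ : c ≤ ρ - σ) (hc₂ : c ≤ 1 - ρ - σ) {j : Fin k}
    (hjoin : ∀ v ∈ C j, ∀ w ∈ C j, v ≠ w → sameCluster 𝒞 s(v, w))
    (hcut : ∀ v ∈ C j, ∀ w ∉ C j, ¬ sameCluster 𝒞 s(v, w)) :
    0 ≤ ∑ e ∈ pairsBetween (C j) (uncovered C j), surplus f sign 𝒞 c e := by
  have hball : ∀ v ∈ C j, f.x (u j) v ≤ ρ := fun v hv => (hC.mem_iff.mp hv).2
  have hdense : ∑ v ∈ C j, f.x (u j) v ≤ σ * (C j).card := (hC j).2.2.2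
  refine sum_pairsBetween_nonneg (hC.subset_uncovered j) (fun w hw => ?_) (fun w hw => ?_)
  · exact sum_erase_surplus_nonneg_of_sameCluster hball hdense hw
      (fun v hv => hjoin v (mem_of_mem_erase hv) w hw (ne_of_mem_erase hv)) hc₂
  · obtain ⟨hwU, hwC⟩ := mem_sdiff.mp hw
    exact sum_surplus_nonneg_of_not_sameCluster hball hdense (hC.lt_x_of_notMem hwU hwC).le
      (fun v hv => hcut v hv w hwC) hc₁ hc₂

lemma mul_corrCost_le_LPcost (hC : ClusterSeq f ρ σ C u) {sign : Sym2 V → Bool}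
    {𝒞 : Finset (Finset V)} {c : ℝ} (hc₁ : c ≤ ρ - σ) (hc₂ : c ≤ 1 - ρ - σ)
    (h𝒞 : ∀ a b, a ≠ b → (sameCluster 𝒞 s(a, b) ↔ ∃ j, a ∈ C j ∧ b ∈ C j)) :
    c * corrCost sign 𝒞 (pairsBetween (univ.biUnion C) univ) ≤
      LPcost f sign (pairsBetween (univ.biUnion C) univ) := by
  have hsub := hC.subset_uncovered
  have hjoin : ∀ j, ∀ v ∈ C j, ∀ w ∈ C j, v ≠ w → sameCluster 𝒞 s(v, w) :=
    fun j v hv w hw hvw => (h𝒞 v w hvw).mpr ⟨j, hv, hw⟩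
  have hcut : ∀ j, ∀ v ∈ C j, ∀ w ∉ C j, ¬ sameCluster 𝒞 s(v, w) := by
    intro j v hv w hw hvw
    obtain ⟨i, hvi, hwi⟩ := (h𝒞 v w (ne_of_mem_of_not_mem hv hw)).mp hvw
    exact hw (eq_of_mem_of_subset_uncovered hsub hvi hv ▸ hwi)
  rw [← sub_nonneg, ← sum_surplus, pairsBetween_biUnion_univ,
    sum_biUnion ((pairwise_disjoint_pairsBetween_uncovered hsub).set_pairwise _)]
  exact sum_nonneg fun j _ =>
    hC.sum_surplus_pairsBetween_uncovered_nonneg hc₁ hc₂ (hjoin j) (hcut j)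

end ClusterSeq

theorem nondegenerate_cost_bound_general {V : Type*} [Fintype V] [DecidableEq V]
    (sign : Sym2 V → Bool) (f : FracAssign V) (σ ρ : ℝ) (hσρ : σ < ρ) (hρσ : ρ + σ < 1)
    {k : ℕ} (C : Fin k → Finset V) (u : Fin k → V) (hC : ClusterSeq f ρ σ C u) :
    (corrCost sign
        ((Finset.univ.image C) ∪
          ((Finset.univ \ Finset.univ.biUnion C).image (fun v => {v})))
        (pairsBetween (Finset.univ.biUnion C) Finset.univ) : ℝ) ≤
      max (1 / (ρ - σ)) (1 / (1 - ρ - σ)) *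
        LPcost f sign (pairsBetween (Finset.univ.biUnion C) Finset.univ) := by
  have hpos₁ : 0 < ρ - σ := by linarith
  have hpos₂ : 0 < 1 - ρ - σ := by linarith
  have hmax : max (1 / (ρ - σ)) (1 / (1 - ρ - σ)) = (min (ρ - σ) (1 - ρ - σ))⁻¹ := by
    simpa only [one_div] using (antitoneOn_inv_pos.map_min hpos₁ hpos₂).symm
  rw [hmax, le_inv_mul_iff₀ (lt_min hpos₁ hpos₂)]
  exact hC.mul_corrCost_le_LPcost (min_le_left _ _) (min_le_right _ _) fun a b hab =>
    (sameCluster_union_singletons hab).trans sameCluster_image_univ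

/-- Edges touching the non-degenerate clusters of a
`(ρ,σ)`-cluster sequence cost at most `max (1/(ρ-σ)) (1/(1-ρ-σ))` times their
LP cost-share, for the clustering made of these clusters plus singletons. -/
theorem nondegenerate_cost_bound {V : Type*} [Fintype V] [DecidableEq V]
    (sign : Sym2 V → Bool) (f : FracAssign V)
    (σ ρ : ℝ) (hσ : 0 < σ) (hρ1 : 2 * σ ≤ ρ) (hρ2 : ρ ≤ 1 / 2)
    {k : ℕ} (C : Fin k → Finset V) (u : Fin k → V)
    (hC : ClusterSeq f ρ σ C u) :
    (corrCost sign
        ((Finset.univ.image C) ∪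
          ((Finset.univ \ Finset.univ.biUnion C).image (fun v => {v})))
        (pairsBetween (Finset.univ.biUnion C) Finset.univ) : ℝ) ≤
      max (1 / (ρ - σ)) (1 / (1 - ρ - σ)) *
        LPcost f sign (pairsBetween (Finset.univ.biUnion C) Finset.univ) :=
  nondegenerate_cost_bound_general sign f σ ρ (by linarith) (by linarith) C u hC
end

section
/- Let V be a finite vertex set with a complete signed graph, x a fractional assignment on V, and parameters σ, ρ with 0 < σ and 2σ ≤ ρ ≤ 1/2. Let u ∈ V, let T ⊆ {w ∈ V : x(u,w) ≤ ρ}, and let v ∈ V be a vertex with x(u,v) ≥ 1 − σ. Then |E⁺(v,T)| ≤ (1/(1−ρ−σ)) · LP(E⁺(v,T)), where E⁺(v,T) is the set of positive pairs with one endpoint v and the other in T. -/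
open Finset
open scoped Classical

variable {V : Type*}

/-! A positive pair costs its `x`-value, and by the triangle inequality every pair `{v, w}` with
`w ∈ T` has `x v w ≥ x u v - x u w ≥ 1 - ρ - σ`; summing over `E⁺(v,T)` gives the bound. -/

namespace FracAssign

@[simp]
theorem val_mk (f : FracAssign V) (a b : V) : f.val s(a, b) = f.x a b := rfl

theorem x_sub_x_le (f : FracAssign V) (u v w : V) : f.x u v - f.x u w ≤ f.x v w := by
  rw [sub_le_iff_le_add', f.symm v w]
  exact f.triangle u w v

end FracAssign

theorem LPcost_eq_sum_val_of_forall_sign (f : FracAssign V) {sign : Sym2 V → Bool}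
    {F : Finset (Sym2 V)} (hF : ∀ e ∈ F, sign e) : LPcost f sign F = ∑ e ∈ F, f.val e :=
  sum_congr rfl fun e he => if_pos (hF e he)

theorem card_mul_le_LPcost (f : FracAssign V) {sign : Sym2 V → Bool} {F : Finset (Sym2 V)} {c : ℝ}
    (hF : ∀ e ∈ F, sign e) (hc : ∀ e ∈ F, c ≤ f.val e) : #F * c ≤ LPcost f sign F := by
  rw [LPcost_eq_sum_val_of_forall_sign f hF, ← nsmul_eq_mul]
  exact card_nsmul_le_sum F f.val c hc

section Epos

variable [Fintype V] [DecidableEq V] {sign : Sym2 V → Bool} {S T : Finset V} {e : Sym2 V}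

theorem mem_Epos :
    e ∈ Epos sign S T ↔ (¬ e.IsDiag ∧ ∃ a b, e = s(a, b) ∧ a ∈ S ∧ b ∈ T) ∧ sign e := by
  simp only [Epos, pairsBetween, mem_filter, mem_univ, true_and]

theorem sign_of_mem_Epos (he : e ∈ Epos sign S T) : sign e :=
  (mem_Epos.mp he).2

theorem exists_eq_mk_of_mem_Epos_singleton {v : V} (he : e ∈ Epos sign {v} T) :
    ∃ w ∈ T, e = s(v, w) := by
  obtain ⟨⟨-, a, w, rfl, ha, hw⟩, -⟩ := mem_Epos.mp he
  exact ⟨w, hw, by rw [mem_singleton.mp ha]⟩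

end Epos

theorem far_positive_edges_general [Fintype V] [DecidableEq V]
    (sign : Sym2 V → Bool) (f : FracAssign V) {σ ρ : ℝ} (hρσ : ρ + σ < 1)
    {u : V} {T : Finset V} (hT : ∀ w ∈ T, f.x u w ≤ ρ) {v : V} (hv : 1 - σ ≤ f.x u v) :
    (#(Epos sign {v} T) : ℝ) ≤ (1 / (1 - ρ - σ)) * LPcost f sign (Epos sign {v} T) := by
  have hpos : 0 < 1 - ρ - σ := by linarith
  have hfar : ∀ e ∈ Epos sign {v} T, 1 - ρ - σ ≤ f.val e := by
    intro e he
    obtain ⟨w, hw, rfl⟩ := exists_eq_mk_of_mem_Epos_singleton he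
    calc 1 - ρ - σ ≤ f.x u v - f.x u w := by linarith [hT w hw]
      _ ≤ f.x v w := f.x_sub_x_le u v w
      _ = f.val s(v, w) := (f.val_mk v w).symm
  rw [one_div_mul_eq_div, le_div_iff₀ hpos]
  exact card_mul_le_LPcost f (fun _ => sign_of_mem_Epos) hfar

/-- Lemma: far positive crossing edges.  If `x u v ≥ 1 - σ`
and `T` lies in the `ρ`-ball around `u`, then
`|E⁺(v,T)| ≤ (1/(1-ρ-σ)) · LP(E⁺(v,T))`. -/
theorem far_positive_edges {V : Type*} [Fintype V] [DecidableEq V]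
    (sign : Sym2 V → Bool) (f : FracAssign V)
    (σ ρ : ℝ) (hσ : 0 < σ) (hρ1 : 2 * σ ≤ ρ) (hρ2 : ρ ≤ 1 / 2)
    (u : V) (T : Finset V) (hT : ∀ w ∈ T, f.x u w ≤ ρ)
    (v : V) (hv : 1 - σ ≤ f.x u v) :
    ((Epos sign {v} T).card : ℝ) ≤
      (1 / (1 - ρ - σ)) * LPcost f sign (Epos sign {v} T) := by
  exact far_positive_edges_general sign f (by linarith) hT hv
end

section
/- Let V be a finite vertex set with a complete signed graph, x a fractional assignment on V, and parameters σ, ρ with 0 < σ and 2σ ≤ ρ ≤ 1/2. Let u ∈ V and let T ⊆ {w ∈ V : x(u,w) ≤ ρ} satisfy the density condition Σ_{w∈T} x(u,w) ≤ σ·|T|. Let < be a strict total order on T such that v < w implies x(u,v) ≤ x(u,w), and for v ∈ T set T^<(v) := {w ∈ T : w < v}. Then for every v ∈ T with x(u,v) > ρ/2, |E⁻(v, T^<(v))| ≤ (1/(1−ρ−σ)) · LP(E(v, T^<(v))). -/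
open Finset
open scoped Classical

variable {V : Type*}

/-!
By the triangle inequality through `u`, the pair `{v, w}` costs at least
`x(u,v) - x(u,w) ≥ σ - x(u,w)` if it is positive, and at least
`1 - ρ - x(u,w) = (1 - ρ - σ) + (σ - x(u,w))` if it is negative. So each negative pair pays
`1 - ρ - σ`, and the terms `σ - x(u,w)` remain. These have a nonnegative sum over `T` by density,
hence also over the predecessors of `v`: the vertices of `T` left out are at distance at least
`x(u,v) > ρ/2 ≥ σ` from `u`, so their terms are nonpositive.
-/

theorem sum_le_card_nsmul_of_subset {ι M : Type*} [AddCommMonoid M] [PartialOrder M]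
    [IsOrderedCancelAddMonoid M] {S T : Finset ι} {g : ι → M} {c : M}
    (hST : S ⊆ T) (hc : ∀ i ∈ T, i ∉ S → c ≤ g i) (hT : ∑ i ∈ T, g i ≤ #T • c) :
    ∑ i ∈ S, g i ≤ #S • c := by
  have hdiff : #(T \ S) • c ≤ ∑ i ∈ T \ S, g i :=
    card_nsmul_le_sum _ _ _ fun i hi ↦ hc i (mem_sdiff.1 hi).1 (mem_sdiff.1 hi).2
  refine le_of_add_le_add_left (a := ∑ i ∈ T \ S, g i) ?_
  calc ∑ i ∈ T \ S, g i + ∑ i ∈ S, g i = ∑ i ∈ T, g i := sum_sdiff hST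
    _ ≤ #T • c := hT
    _ = #(T \ S) • c + #S • c := by rw [← add_nsmul, card_sdiff_add_card_eq_card hST]
    _ ≤ ∑ i ∈ T \ S, g i + #S • c := by gcongr

theorem rel_of_lt_of_total_of_monotone {α β : Type*} [Preorder β] {s : Set α}
    {r : α → α → Prop} {g : α → β} (htotal : ∀ a ∈ s, ∀ b ∈ s, a ≠ b → r a b ∨ r b a)
    (hmono : ∀ a ∈ s, ∀ b ∈ s, r a b → g a ≤ g b) {a b : α} (ha : a ∈ s) (hb : b ∈ s)
    (hab : g a < g b) : r a b :=
  (htotal a ha b hb (ne_of_apply_ne g hab.ne)).resolve_right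
    fun hba ↦ (hmono b hb a ha hba).not_gt hab

/-- `E(v,S)`, the pairs joining `v` to the vertices of `S` other than `v`. Unlike `pairsBetween`,
this makes sense for infinite `V`. -/
noncomputable def pairsFrom (v : V) (S : Finset V) : Finset (Sym2 V) :=
  (S.erase v).map (Sym2.mkEmbedding v)

theorem pairsBetween_singleton_left [Fintype V] [DecidableEq V] (v : V) (S : Finset V) :
    pairsBetween {v} S = pairsFrom v S := by
  ext e
  simp only [pairsBetween, pairsFrom, mem_filter, mem_univ, true_and, mem_singleton, mem_map,
    mem_erase, Sym2.mkEmbedding_apply]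
  constructor
  · rintro ⟨hdiag, _, w, rfl, rfl, hw⟩
    exact ⟨w, ⟨fun h ↦ hdiag (Sym2.mk_isDiag_iff.2 h.symm), hw⟩, rfl⟩
  · rintro ⟨w, ⟨hne, hw⟩, rfl⟩
    exact ⟨fun h ↦ hne (Sym2.mk_isDiag_iff.1 h).symm, v, w, rfl, rfl, hw⟩

theorem card_filter_pairsFrom (p : Sym2 V → Prop) [DecidablePred p] (v : V) (S : Finset V) :
    #{e ∈ pairsFrom v S | p e} = #{w ∈ S.erase v | p s(v, w)} := by
  rw [pairsFrom, filter_map, card_map]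
  rfl

theorem LPcost_pairsFrom (f : FracAssign V) (sign : Sym2 V → Bool) (v : V) (S : Finset V) :
    LPcost f sign (pairsFrom v S) =
      ∑ w ∈ S.erase v, if sign s(v, w) then f.x v w else 1 - f.x v w :=
  sum_map _ _ _

namespace FracAssign

variable (f : FracAssign V) (sign : Sym2 V → Bool) {σ ρ : ℝ} {u v : V}

theorem add_sub_le_pair_cost (hσ : σ ≤ f.x u v) (hρ : f.x u v ≤ ρ) (w : V) :
    (if ¬ sign s(v, w) then 1 - ρ - σ else 0) + (σ - f.x u w) ≤
      if sign s(v, w) then f.x v w else 1 - f.x v w := by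
  have hlower : f.x u v ≤ f.x u w + f.x v w := f.symm w v ▸ f.triangle u w v
  have hupper : f.x v w ≤ f.x u v + f.x u w := f.symm v u ▸ f.triangle v u w
  split_ifs <;> linarith

theorem card_negative_mul_le_sum_cost {S : Finset V} (hσ : σ ≤ f.x u v) (hρ : f.x u v ≤ ρ)
    (hS : ∑ w ∈ S, f.x u w ≤ #S • σ) :
    #{w ∈ S | ¬ sign s(v, w)} * (1 - ρ - σ) ≤
      ∑ w ∈ S, if sign s(v, w) then f.x v w else 1 - f.x v w := by
  calc #{w ∈ S | ¬ sign s(v, w)} * (1 - ρ - σ)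
      = ∑ w ∈ S, if ¬ sign s(v, w) then 1 - ρ - σ else 0 := by
        rw [← sum_filter, sum_const, nsmul_eq_mul]
    _ ≤ (∑ w ∈ S, if ¬ sign s(v, w) then 1 - ρ - σ else 0) + ∑ w ∈ S, (σ - f.x u w) := by
        rw [sum_sub_distrib, sum_const]
        linarith
    _ ≤ ∑ w ∈ S, if sign s(v, w) then f.x v w else 1 - f.x v w := by
        rw [← sum_add_distrib]
        exact sum_le_sum fun w _ ↦ f.add_sub_le_pair_cost sign hσ hρ w

end FracAssign

theorem long_negative_edges_general (sign : Sym2 V → Bool) (f : FracAssign V) {σ ρ : ℝ}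
    (hσρ : ρ + σ < 1) {u v : V} (hσ : σ ≤ f.x u v) (hρ : f.x u v ≤ ρ) {S T : Finset V}
    (hdense : ∑ w ∈ T, f.x u w ≤ σ * #T) (hST : S ⊆ T)
    (hnear : ∀ w ∈ T, f.x u w < σ → w ∈ S) :
    (#{e ∈ pairsFrom v S | ¬ sign e} : ℝ) ≤
      (1 / (1 - ρ - σ)) * LPcost f sign (pairsFrom v S) := by
  have hfar : ∀ w ∈ T, w ∉ S.erase v → σ ≤ f.x u w := by
    intro w hwT hwS
    by_contra! hlt
    exact hwS (mem_erase.2 ⟨fun h ↦ (h ▸ hlt).not_ge hσ, hnear w hwT hlt⟩)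
  have hdense' : ∑ w ∈ S.erase v, f.x u w ≤ #(S.erase v) • σ :=
    sum_le_card_nsmul_of_subset ((erase_subset v S).trans hST) hfar
      (by rwa [nsmul_eq_mul, mul_comm])
  rw [one_div_mul_eq_div, le_div_iff₀ (by linarith), card_filter_pairsFrom, LPcost_pairsFrom]
  exact f.card_negative_mul_le_sum_cost sign hσ hρ hdense'

/-- Lemma: long negative edges.  With `T` a dense `ρ`-ball
around `u` and `r` a strict total order on `T` compatible with distance to `u`,
for each `v ∈ T` with `x u v > ρ/2` we have
`|E⁻(v, T^<(v))| ≤ (1/(1-ρ-σ)) · LP(E(v, T^<(v)))`. -/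
theorem long_negative_edges {V : Type*} [Fintype V] [DecidableEq V]
    (sign : Sym2 V → Bool) (f : FracAssign V)
    (σ ρ : ℝ) (hσ : 0 < σ) (hρ1 : 2 * σ ≤ ρ) (hρ2 : ρ ≤ 1 / 2)
    (u : V) (T : Finset V) (hT : ∀ w ∈ T, f.x u w ≤ ρ)
    (hdense : ∑ w ∈ T, f.x u w ≤ σ * T.card)
    (r : V → V → Prop)
    (hirr : ∀ a ∈ T, ¬ r a a)
    (htrans : ∀ a ∈ T, ∀ b ∈ T, ∀ c ∈ T, r a b → r b c → r a c)
    (htotal : ∀ a ∈ T, ∀ b ∈ T, a ≠ b → r a b ∨ r b a)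
    (hmono : ∀ a ∈ T, ∀ b ∈ T, r a b → f.x u a ≤ f.x u b)
    (v : V) (hvT : v ∈ T) (hv : ρ / 2 < f.x u v) :
    ((Eneg sign {v} (T.filter (fun w => r w v))).card : ℝ) ≤
      (1 / (1 - ρ - σ)) *
        LPcost f sign (pairsBetween {v} (T.filter (fun w => r w v))) := by
  have hσv : σ ≤ f.x u v := by linarith
  rw [Eneg, pairsBetween_singleton_left]
  exact long_negative_edges_general sign f (by linarith) hσv (hT v hvT) hdense (filter_subset _ T)
    fun w hw hlt ↦ mem_filter.2
      ⟨hw, rel_of_lt_of_total_of_monotone (s := T) htotal hmono hw hvT (hlt.trans_le hσv)⟩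
end

section
/- Let V be a finite vertex set with a complete signed graph, x a fractional assignment on V, ε > 0, ρ ≤ 1/2, a color class V_i ⊆ V with parameter 0 < α_i < 1, and a vertex u ∈ V such that the LP fairness constraint Σ_{v∈V_i}(1 − x(u,v)) ≤ α_i · Σ_{v∈V}(1 − x(u,v)) holds. Let T ⊆ {v ∈ V : x(u,v) ≤ ρ} be a set with |V_i ∩ T| > (1+ε)·α_i·|T|. Then, writing α_i' := α_i/(1−α_i), we have ε·α_i'·|T| ≤ LP(E(u, V_i ∩ T)) + α_i' · Σ_{v ∈ (V∖T)∖V_i} (1 − x(u,v)). -/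
open Finset
open scoped Classical

variable {V : Type*}

/-! Split `V` by membership in the color class `C` and in `T`. The fairness constraint bounds
`(1 - α)` times the closeness `1 - x u v` summed over `C` by `α` times its sum over `Cᶜ`. Keeping
only `C ∩ T` on the left and estimating the closeness by `1` on `T \ C`, one finds that the excess
`|C ∩ T| - α |T|` of the color in `T` is at most
`(1 - α) ∑_{v ∈ C ∩ T} x u v + α ∑_{v ∈ Tᶜ \ C} (1 - x u v)`. The violation makes the excess larger
than `ε α |T|`, and since `x u v ≤ 1/2` on `T`, a pair `{u, v}` costs at least `x u v` in the LP
whatever its sign. Dividing by `1 - α` gives the charge. -/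

section FairSums

variable [Fintype V] [DecidableEq V] {R : Type*} [CommRing R] [LinearOrder R]
  [IsStrictOrderedRing R] {α : R} {C : Finset V}

lemma one_sub_mul_sum_le_mul_sum_compl {w : V → R}
    (hfair : ∑ v ∈ C, w v ≤ α * ∑ v, w v) :
    (1 - α) * ∑ v ∈ C, w v ≤ α * ∑ v ∈ Cᶜ, w v := by
  rw [← sum_add_sum_compl C w] at hfair
  linarith

lemma sum_one_sub_compl_le (C T : Finset V) {d : V → R} (hd : ∀ v, 0 ≤ d v) :
    ∑ v ∈ Cᶜ, (1 - d v) ≤ #T - #(C ∩ T) + ∑ v ∈ Tᶜ \ C, (1 - d v) := by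
  have hsplit : Cᶜ = T \ C ∪ Tᶜ \ C := by
    ext v
    simp only [mem_compl, mem_union, mem_sdiff]
    tauto
  have hdisj : Disjoint (T \ C) (Tᶜ \ C) :=
    disjoint_compl_right.mono sdiff_subset sdiff_subset
  have hcard : (#(T \ C) : R) = #T - #(C ∩ T) := by
    rw [card_sdiff, Nat.cast_sub (card_le_card inter_subset_right)]
  have hsum : ∑ v ∈ T \ C, (1 - d v) ≤ #(T \ C) := by
    simpa using sum_le_card_nsmul (T \ C) (1 - d ·) 1 fun v _ ↦ sub_le_self 1 (hd v)
  rw [hsplit, sum_union hdisj, ← hcard]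
  gcongr

theorem card_inter_sub_mul_card_le {d : V → R} (hα0 : 0 ≤ α) (hα1 : α ≤ 1)
    (hd0 : ∀ v, 0 ≤ d v) (hd1 : ∀ v, d v ≤ 1)
    (hfair : ∑ v ∈ C, (1 - d v) ≤ α * ∑ v, (1 - d v)) (T : Finset V) :
    #(C ∩ T) - α * #T ≤ (1 - α) * ∑ v ∈ C ∩ T, d v + α * ∑ v ∈ Tᶜ \ C, (1 - d v) := by
  have hinter : ∑ v ∈ C ∩ T, (1 - d v) = #(C ∩ T) - ∑ v ∈ C ∩ T, d v := by
    simp [sum_sub_distrib]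
  have hclose : (1 - α) * (#(C ∩ T) - ∑ v ∈ C ∩ T, d v) ≤
      α * (#T - #(C ∩ T) + ∑ v ∈ Tᶜ \ C, (1 - d v)) :=
    calc (1 - α) * (#(C ∩ T) - ∑ v ∈ C ∩ T, d v)
        = (1 - α) * ∑ v ∈ C ∩ T, (1 - d v) := by rw [hinter]
      _ ≤ (1 - α) * ∑ v ∈ C, (1 - d v) :=
        mul_le_mul_of_nonneg_left
          (sum_le_sum_of_subset_of_nonneg inter_subset_left fun v _ _ ↦ sub_nonneg.2 (hd1 v))
          (sub_nonneg.2 hα1)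
      _ ≤ α * ∑ v ∈ Cᶜ, (1 - d v) := one_sub_mul_sum_le_mul_sum_compl hfair
      _ ≤ α * (#T - #(C ∩ T) + ∑ v ∈ Tᶜ \ C, (1 - d v)) :=
        mul_le_mul_of_nonneg_left (sum_one_sub_compl_le C T hd0) hα0
  linarith

end FairSums

section Star

variable [Fintype V] [DecidableEq V]

lemma pairsBetween_singleton_left_s11 (u : V) (S : Finset V) :
    pairsBetween {u} S = (S.erase u).image (s(u, ·)) := by
  ext e
  simp only [pairsBetween, mem_filter, mem_univ, true_and, mem_singleton, mem_image, mem_erase]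
  constructor
  · rintro ⟨hdiag, _, v, rfl, rfl, hv⟩
    exact ⟨v, ⟨fun h ↦ hdiag (Sym2.mk_isDiag_iff.2 h.symm), hv⟩, rfl⟩
  · rintro ⟨v, ⟨hvu, hv⟩, rfl⟩
    exact ⟨fun h ↦ hvu (Sym2.mk_isDiag_iff.1 h).symm, u, v, rfl, rfl, hv⟩

lemma LPcost_pairsBetween_singleton_left (f : FracAssign V) (sign : Sym2 V → Bool) (u : V)
    (S : Finset V) :
    LPcost f sign (pairsBetween {u} S) =
      ∑ v ∈ S.erase u, if sign s(u, v) then f.x u v else 1 - f.x u v := by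
  rw [LPcost, pairsBetween_singleton_left_s11, sum_image fun _ _ _ _ h ↦ Sym2.congr_right.1 h]
  rfl

lemma sum_le_LPcost_pairsBetween_singleton_left (f : FracAssign V) (sign : Sym2 V → Bool) {u : V}
    {S : Finset V} (hS : ∀ v ∈ S, f.x u v ≤ 1 / 2) :
    ∑ v ∈ S, f.x u v ≤ LPcost f sign (pairsBetween {u} S) := by
  rw [LPcost_pairsBetween_singleton_left, ← sum_erase S (f.diag u)]
  refine sum_le_sum fun v hv ↦ ?_
  have hhalf := hS v (mem_of_mem_erase hv)
  split_ifs <;> linarith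

end Star

/-- Claim: fairness violation gives LP charge.  If the LP
fairness constraint for color `Vi` holds at `u`, `T` lies in the `ρ`-ball
around `u` and the `ε`-fairness of `T` for `Vi` is violated, then
`ε·α'·|T| ≤ LP(E(u, Vi∩T)) + α' · ∑_{v∈(V∖T)∖Vi} (1 - x u v)`
with `α' = αi/(1-αi)`. -/
theorem fairness_violation_charge {V : Type*} [Fintype V] [DecidableEq V]
    (sign : Sym2 V → Bool) (f : FracAssign V)
    (ε ρ : ℝ) (hε : 0 < ε) (hρ : ρ ≤ 1 / 2)
    (Vi : Finset V) (αi : ℝ) (hαi0 : 0 < αi) (hαi1 : αi < 1)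
    (u : V)
    (hfair : ∑ v ∈ Vi, (1 - f.x u v) ≤ αi * ∑ v : V, (1 - f.x u v))
    (T : Finset V) (hT : ∀ v ∈ T, f.x u v ≤ ρ)
    (hviol : (1 + ε) * αi * (T.card : ℝ) < ((Vi ∩ T).card : ℝ)) :
    ε * (αi / (1 - αi)) * T.card ≤
      LPcost f sign (pairsBetween {u} (Vi ∩ T)) +
        (αi / (1 - αi)) * ∑ v ∈ (Finset.univ \ T) \ Vi, (1 - f.x u v) := by
  have hα : 0 < 1 - αi := sub_pos.2 hαi1
  have hLP : ∑ v ∈ Vi ∩ T, f.x u v ≤ LPcost f sign (pairsBetween {u} (Vi ∩ T)) :=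
    sum_le_LPcost_pairsBetween_singleton_left f sign
      fun v hv ↦ (hT v (mem_of_mem_inter_right hv)).trans hρ
  rw [← compl_eq_univ_sdiff]
  set L := LPcost f sign (pairsBetween {u} (Vi ∩ T))
  set R := ∑ v ∈ Tᶜ \ Vi, (1 - f.x u v)
  have hcharge : ε * αi * #T ≤ (1 - αi) * L + αi * R :=
    calc ε * αi * #T = (1 + ε) * αi * #T - αi * #T := by ring
      _ ≤ #(Vi ∩ T) - αi * #T := by gcongr
      _ ≤ (1 - αi) * ∑ v ∈ Vi ∩ T, f.x u v + αi * R :=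
        card_inter_sub_mul_card_le hαi0.le hαi1.le (f.nonneg u) (f.le_one u) hfair T
      _ ≤ (1 - αi) * L + αi * R := by gcongr
  calc ε * (αi / (1 - αi)) * #T = ε * αi * #T / (1 - αi) := by ring
    _ ≤ ((1 - αi) * L + αi * R) / (1 - αi) := by gcongr
    _ = L + αi / (1 - αi) * R := by field_simp
end
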